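/- Let Q be a privacy protocol all of whose entries are positive and whose rank is a, and let μ be a Borel probability measure on the simplex 𝒫 having a continuous density f, with p ↦ log det D_p μ-integrable. Then lim_{n→∞} ( h_n(P|Y⃗) + ((a−1)/2)·log n ) = γ_μ(Q). -/

import Mathlib

/-!
In the coordinates `q` of the simplex, `q ↦ Q p(q) = c₀ + B q` is an injective affine map, so the
observations form an i.i.d. sample from an identifiable affine family of distributions with all
probabilities bounded away from zero (`LinModel`). Its Fisher information
`J(q) = Bᵀ diag(Q p(q))⁻¹ B` has the determinant of `D_p` (`det_Dmat`, by a unimodular change of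
basis using `D_p p = (1, …, 1)`). Hence the claim is that the conditional entropy `condH` is
asymptotically the mean entropy of Gaussians with covariance `(n J(q))⁻¹` in dimension
`m = a - 1` (`tendsto_condH`).

Upper bound. By Gibbs' inequality the entropy of each posterior is at most its cross-entropy with
any Gaussian density. The Gaussian is centred at the weighted least squares estimator, with the
inverse of `n` times the plug-in Fisher matrix at the (truncated) empirical frequencies as
covariance. The expected cross-entropy (`condH_le`) is a continuous function of the frequencies
plus a quadratic form in the centred counts, so second and fourth moments of the multinomial
distribution give its limit for fixed `q` (`tendsto_sampleExp_plugin`), and dominated convergence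
integrates it over `q`.

Lower bound. The entropy equals the expectation of `log (marginal / likelihood)` plus the entropy
of the prior. By Gibbs' inequality on the set of samples the marginal may be replaced by the
mixture for the prior `f + ε`, at the price of `log (1 + ε V)`, `V` being the volume of the corner
simplex (`condH_ge`). For interior `q`, restricting the mixture to a ball of radius of order
`n^(-1/2)`, expanding the log-likelihood to second order and using Jensen's inequality in the form
`exp x ≥ 1 + x` gives a Laplace-type lower bound for the expected log-ratio (`logRatio_ge`) with
the right limit. A crude bound uniform in `n` and `q` (`logRatio_bound`), available because
`f + ε ≥ ε`, allows dominated convergence; then `ε → 0`.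
-/

open MeasureTheory Matrix Finset Filter Real

noncomputable section

/-- The probability simplex in `ℝ^a`. -/
def simplex (a : ℕ) : Set (Fin a → ℝ) :=
  {p | (∀ x, 0 ≤ p x) ∧ ∑ x, p x = 1}

/-- Likelihood `L_y(p) = ∏ i, (Qp)_{y i}`. -/
def lik {a b n : ℕ} (Q : Matrix (Fin b) (Fin a) ℝ) (y : Fin n → Fin b)
    (p : Fin a → ℝ) : ℝ :=
  ∏ i, Q.mulVec p (y i)

/-- Mean squared error for distribution estimation. -/
def MSEdistr {a b n : ℕ} (Q : Matrix (Fin b) (Fin a) ℝ) (μ : Measure (Fin a → ℝ))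
    (Est : (Fin n → Fin b) → (Fin a → ℝ)) : ℝ :=
  ∑ y : (Fin n → Fin b), ∫ p, (∑ x, (p x - Est y x) ^ 2) * lik Q y p ∂μ

/-- The posterior-mean estimator for distribution estimation. -/
def PiOpt {a b n : ℕ} (Q : Matrix (Fin b) (Fin a) ℝ) (μ : Measure (Fin a → ℝ))
    (y : Fin n → Fin b) : Fin a → ℝ :=
  fun x => (∫ p, p x * lik Q y p ∂μ) / (∫ p, lik Q y p ∂μ)

/-- Empirical frequency vector of a data vector. -/
def freqVec {a n : ℕ} (xv : Fin n → Fin a) : Fin a → ℝ :=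
  fun α => ((Finset.univ.filter fun i => xv i = α).card : ℝ) / n

/-- Joint weight `w(x⃗,y⃗) = ∫ ∏ i, p_{x_i} Q_{y_i|x_i} dμ(p)`. -/
def wgt {a b n : ℕ} (Q : Matrix (Fin b) (Fin a) ℝ) (μ : Measure (Fin a → ℝ))
    (xv : Fin n → Fin a) (y : Fin n → Fin b) : ℝ :=
  ∫ p, (∏ i, p (xv i) * Q (y i) (xv i)) ∂μ

/-- Mean squared error for frequency estimation. -/
def MSEfreq {a b n : ℕ} (Q : Matrix (Fin b) (Fin a) ℝ) (μ : Measure (Fin a → ℝ))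
    (Est : (Fin n → Fin b) → (Fin a → ℝ)) : ℝ :=
  ∑ xv : (Fin n → Fin a), ∑ y : (Fin n → Fin b),
    wgt Q μ xv y * ∑ α, (freqVec xv α - Est y α) ^ 2

/-- The posterior-mean estimator for frequency estimation. -/
def PhiOpt {a b n : ℕ} (Q : Matrix (Fin b) (Fin a) ℝ) (μ : Measure (Fin a → ℝ))
    (y : Fin n → Fin b) : Fin a → ℝ :=
  fun α => (∑ xv : (Fin n → Fin a), wgt Q μ xv y * freqVec xv α) /
    (∑ xv : (Fin n → Fin a), wgt Q μ xv y)

/-- `P(φ, y⃗) = ∑_{x⃗ : F(x⃗) = φ} w(x⃗, y⃗)`. -/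
def Pphi {a b n : ℕ} (Q : Matrix (Fin b) (Fin a) ℝ) (μ : Measure (Fin a → ℝ))
    (φ : Fin a → ℝ) (y : Fin n → Fin b) : ℝ := by
  classical
  exact ∑ xv ∈ Finset.univ.filter (fun xv : Fin n → Fin a => freqVec xv = φ), wgt Q μ xv y

/-- Conditional Shannon entropy `H_n(F | Y⃗)` (terms with zero probability vanish since
`Real.log 0 = 0`). -/
def HFcond {a b : ℕ} (Q : Matrix (Fin b) (Fin a) ℝ) (μ : Measure (Fin a → ℝ))
    (n : ℕ) : ℝ := by
  classical
  exact -(∑ y : (Fin n → Fin b), ∑ φ ∈ Finset.image (freqVec (a := a) (n := n)) Finset.univ,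
      Pphi Q μ φ y * Real.log (Pphi Q μ φ y /
        ∑ φ' ∈ Finset.image (freqVec (a := a) (n := n)) Finset.univ, Pphi Q μ φ' y))

/-- The set `Δ = {q ∈ ℝ^m : q ≥ 0, ∑ q ≤ 1}`. -/
def stdCorner (m : ℕ) : Set (Fin m → ℝ) :=
  {q | (∀ i, 0 ≤ q i) ∧ ∑ i, q i ≤ 1}

/-- The identification `Δ ⊂ ℝ^{a-1} → 𝒫 ⊂ ℝ^a`,
`q ↦ (q_1, …, q_{a-1}, 1 - ∑ q_i)`. -/
def emb (a : ℕ) (q : Fin (a - 1) → ℝ) : Fin a → ℝ :=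
  fun x => if h : (x : ℕ) < a - 1 then q ⟨x.1, h⟩ else 1 - ∑ i, q i

/-- `μ` has density `f` (w.r.t. Lebesgue measure on `Δ`). -/
def IsDensity {a : ℕ} (μ : Measure (Fin a → ℝ)) (f : (Fin (a - 1) → ℝ) → ℝ) : Prop :=
  Measurable f ∧ (∀ q, 0 ≤ f q) ∧ (∫ q in stdCorner (a - 1), f q) = 1 ∧
  ∀ g : (Fin a → ℝ) → ℝ, Measurable g → (∃ C, ∀ p, |g p| ≤ C) →
    (∫ p, g p ∂μ) = ∫ q in stdCorner (a - 1), g (emb a q) * f q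

/-- `μ` has continuous density `f`. -/
def IsContDensity {a : ℕ} (μ : Measure (Fin a → ℝ)) (f : (Fin (a - 1) → ℝ) → ℝ) : Prop :=
  ContinuousOn f (stdCorner (a - 1)) ∧ (∀ q, 0 ≤ f q) ∧
  (∫ q in stdCorner (a - 1), f q) = 1 ∧
  ∀ g : (Fin a → ℝ) → ℝ, Measurable g → (∃ C, ∀ p, |g p| ≤ C) →
    (∫ p, g p ∂μ) = ∫ q in stdCorner (a - 1), g (emb a q) * f q

/-- Normalisation constant `C_{y⃗} = ∫_Δ f(q) L_{y⃗}(p(q)) dλ(q)`. -/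
def Cw {a b n : ℕ} (Q : Matrix (Fin b) (Fin a) ℝ) (f : (Fin (a - 1) → ℝ) → ℝ)
    (y : Fin n → Fin b) : ℝ :=
  ∫ q in stdCorner (a - 1), f q * lik Q y (emb a q)

/-- Posterior density `g_{y⃗}(q) = f(q) L_{y⃗}(p(q)) / C_{y⃗}`. -/
def gpost {a b n : ℕ} (Q : Matrix (Fin b) (Fin a) ℝ) (f : (Fin (a - 1) → ℝ) → ℝ)
    (y : Fin n → Fin b) (q : Fin (a - 1) → ℝ) : ℝ :=
  f q * lik Q y (emb a q) / Cw Q f y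

/-- Conditional differential entropy `h_n(P | Y⃗)`. -/
def hCond {a b : ℕ} (Q : Matrix (Fin b) (Fin a) ℝ) (f : (Fin (a - 1) → ℝ) → ℝ)
    (n : ℕ) : ℝ :=
  ∑ y : (Fin n → Fin b),
    Cw Q f y * (-(∫ q in stdCorner (a - 1), gpost Q f y q * Real.log (gpost Q f y q)))

/-- The matrix `D_p = Qᵀ · diag(Qp)⁻¹ · Q`. -/
def Dmat {a b : ℕ} (Q : Matrix (Fin b) (Fin a) ℝ) (p : Fin a → ℝ) :
    Matrix (Fin a) (Fin a) ℝ :=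
  Qᵀ * Matrix.diagonal (fun y => (Q.mulVec p y)⁻¹) * Q

/-- The constant `γ_μ(Q)`. -/
def gammaMu {a b : ℕ} (Q : Matrix (Fin b) (Fin a) ℝ) (μ : Measure (Fin a → ℝ)) : ℝ :=
  (((a : ℝ) - 1) / 2) * Real.log (2 * π * Real.exp 1) -
    (1 / 2) * ∫ p, Real.log (Dmat Q p).det ∂μ

/-- The truncated column `w_x = (Q_{1|x}, …, Q_{b-1|x})`. -/
def wcol {a b : ℕ} (Q : Matrix (Fin b) (Fin a) ℝ) (x : Fin a) : Fin (b - 1) → ℝ :=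
  fun y => Q ⟨y.1, lt_of_lt_of_le y.2 (Nat.sub_le b 1)⟩ x

/-- The matrix `E_x = diag(w_x) - w_x w_xᵀ`. -/
def Emat {a b : ℕ} (Q : Matrix (Fin b) (Fin a) ℝ) (x : Fin a) :
    Matrix (Fin (b - 1)) (Fin (b - 1)) ℝ :=
  Matrix.diagonal (wcol Q x) - Matrix.vecMulVec (wcol Q x) (wcol Q x)

/-- The matrix `G_p = ∑ x, p_x E_x`. -/
def Gmat {a b : ℕ} (Q : Matrix (Fin b) (Fin a) ℝ) (p : Fin a → ℝ) :
    Matrix (Fin (b - 1)) (Fin (b - 1)) ℝ :=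
  ∑ x, p x • Emat Q x

/-- The constant `δ_μ(Q)`. -/
def deltaMu {a b : ℕ} (Q : Matrix (Fin b) (Fin a) ℝ) (μ : Measure (Fin a → ℝ)) : ℝ :=
  gammaMu Q μ +
    (1 / 2) * ∫ p, (Real.log (Gmat Q p).det - ∑ y, Real.log (Q.mulVec p y)) ∂μ

/-- `Q` satisfies `ε`-local differential privacy. -/
def SatisfiesLDP {a b : ℕ} (Q : Matrix (Fin b) (Fin a) ℝ) (ε : ℝ) : Prop :=
  ∀ x x' : Fin a, ∀ y : Fin b, Q y x' ≤ Real.exp ε * Q y x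

/-! ### Moments of multinomial counts -/

/-- Expectation of `g(Y₁, …, Yₙ)` for an i.i.d. sample of size `n` from the weights `w` on
`{1, …, b}`. -/
def sampleExp {b : ℕ} (w : Fin b → ℝ) {n : ℕ} (g : (Fin n → Fin b) → ℝ) : ℝ :=
  ∑ y : Fin n → Fin b, (∏ i, w (y i)) * g y

section Moments

variable {b n : ℕ} {w : Fin b → ℝ}

lemma sampleExp_add (g h : (Fin n → Fin b) → ℝ) :
    sampleExp w (fun y => g y + h y) = sampleExp w g + sampleExp w h := by
  simp [sampleExp, mul_add, Finset.sum_add_distrib]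

lemma sampleExp_sub (g h : (Fin n → Fin b) → ℝ) :
    sampleExp w (fun y => g y - h y) = sampleExp w g - sampleExp w h := by
  simp [sampleExp, mul_sub, Finset.sum_sub_distrib]

lemma sampleExp_const_mul (r : ℝ) (g : (Fin n → Fin b) → ℝ) :
    sampleExp w (fun y => r * g y) = r * sampleExp w g := by
  simp only [sampleExp, Finset.mul_sum]
  exact Finset.sum_congr rfl fun y _ => by ring

lemma sampleExp_sum {ι : Type*} (s : Finset ι) (g : ι → (Fin n → Fin b) → ℝ) :
    sampleExp w (fun y => ∑ k ∈ s, g k y) = ∑ k ∈ s, sampleExp w (g k) := by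
  simp only [sampleExp, Finset.mul_sum]
  exact Finset.sum_comm

lemma sampleExp_mono (hw : ∀ j, 0 ≤ w j) {g h : (Fin n → Fin b) → ℝ} (hgh : ∀ y, g y ≤ h y) :
    sampleExp w g ≤ sampleExp w h :=
  Finset.sum_le_sum fun y _ =>
    mul_le_mul_of_nonneg_left (hgh y) (Finset.prod_nonneg fun _ _ => hw _)

/-- Conditioning on the first observation. -/
lemma sampleExp_succ (g : (Fin (n + 1) → Fin b) → ℝ) :
    sampleExp w g = ∑ j, w j * sampleExp w (fun y : Fin n → Fin b => g (Fin.cons j y)) := by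
  unfold sampleExp
  rw [← (Fin.consEquiv (fun _ : Fin (n + 1) => Fin b)).sum_comp, Fintype.sum_prod_type]
  refine Finset.sum_congr rfl fun j _ => ?_
  rw [Finset.mul_sum]
  refine Finset.sum_congr rfl fun y _ => ?_
  simp [Fin.consEquiv, Fin.prod_univ_succ, mul_assoc]

lemma sampleExp_const (hw1 : ∑ j, w j = 1) (r : ℝ) :
    sampleExp w (fun _ : Fin n → Fin b => r) = r := by
  induction n with
  | zero => simp [sampleExp]
  | succ n ih => rw [sampleExp_succ]; simp [ih, ← Finset.sum_mul, hw1]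

/-- The sum `X(y₁) + … + X(yₙ)` of a statistic over the sample. -/
def sampleSum (X : Fin b → ℝ) (y : Fin n → Fin b) : ℝ := ∑ i, X (y i)

lemma sampleSum_cons (X : Fin b → ℝ) (j : Fin b) (y : Fin n → Fin b) :
    sampleSum X (Fin.cons j y : Fin (n + 1) → Fin b) = X j + sampleSum X y := by
  simp [sampleSum, Fin.sum_univ_succ]

lemma sampleExp_sampleSum (hw1 : ∑ j, w j = 1) {X : Fin b → ℝ} (hX : ∑ j, w j * X j = 0) :
    sampleExp w (fun y : Fin n → Fin b => sampleSum X y) = 0 := by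
  induction n with
  | zero => simp [sampleExp, sampleSum]
  | succ n ih =>
    rw [sampleExp_succ]
    simp only [sampleSum_cons, sampleExp_add, ih, sampleExp_const hw1, add_zero, hX]

lemma sampleExp_sampleSum_mul (hw1 : ∑ j, w j = 1) {X Z : Fin b → ℝ}
    (hX : ∑ j, w j * X j = 0) (hZ : ∑ j, w j * Z j = 0) :
    sampleExp w (fun y : Fin n → Fin b => sampleSum X y * sampleSum Z y)
      = n * ∑ j, w j * (X j * Z j) := by
  induction n with
  | zero => simp [sampleExp, sampleSum]
  | succ n ih =>
    rw [sampleExp_succ]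
    have key : ∀ j, sampleExp w (fun y : Fin n → Fin b =>
        sampleSum X (Fin.cons j y : Fin (n + 1) → Fin b) *
          sampleSum Z (Fin.cons j y : Fin (n + 1) → Fin b))
        = X j * Z j + n * ∑ j, w j * (X j * Z j) := by
      intro j
      have : ∀ y : Fin n → Fin b, sampleSum X (Fin.cons j y : Fin (n + 1) → Fin b) *
          sampleSum Z (Fin.cons j y : Fin (n + 1) → Fin b)
          = X j * Z j + X j * sampleSum Z y + Z j * sampleSum X y
            + sampleSum X y * sampleSum Z y := by
        intro y; rw [sampleSum_cons, sampleSum_cons]; ring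
      simp only [this, sampleExp_add, ih, sampleExp_const hw1, sampleExp_const_mul,
        sampleExp_sampleSum hw1 hX, sampleExp_sampleSum hw1 hZ]
      ring
    simp only [key, mul_add, Finset.sum_add_distrib, ← Finset.sum_mul, hw1]
    push_cast; ring

/-- Fourth-moment bound for centred statistics bounded by `1`. -/
lemma sampleExp_sampleSum_pow_four (hw : ∀ j, 0 ≤ w j) (hw1 : ∑ j, w j = 1) {X : Fin b → ℝ}
    (hX : ∑ j, w j * X j = 0) (hX1 : ∀ j, |X j| ≤ 1) :
    sampleExp w (fun y : Fin n → Fin b => sampleSum X y ^ 4) ≤ 3 * (n : ℝ) ^ 2 := by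
  induction n with
  | zero => simp [sampleExp, sampleSum]
  | succ n ih =>
    rw [sampleExp_succ]
    have hsq : ∀ j, X j ^ 2 ≤ 1 := fun j => by
      rw [← sq_abs]; exact pow_le_one₀ (abs_nonneg _) (hX1 j)
    have hv : ∑ j, w j * (X j * X j) ≤ 1 := by
      rw [← hw1]
      refine Finset.sum_le_sum fun j _ => ?_
      nlinarith [hsq j, hw j]
    have hv0 : 0 ≤ ∑ j, w j * (X j * X j) :=
      Finset.sum_nonneg fun j _ => mul_nonneg (hw j) (mul_self_nonneg _)
    set v := ∑ j, w j * (X j * X j) with hvdef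
    have h2 : sampleExp w (fun y : Fin n → Fin b => sampleSum X y * sampleSum X y) = n * v :=
      sampleExp_sampleSum_mul hw1 hX hX
    set c3 := sampleExp w (fun y : Fin n → Fin b => sampleSum X y ^ 3) with hc3
    have key : ∀ j, sampleExp w (fun y : Fin n → Fin b =>
        sampleSum X (Fin.cons j y : Fin (n + 1) → Fin b) ^ 4)
        ≤ 1 + 6 * n * (X j * X j) + 4 * X j * c3 + 3 * (n : ℝ) ^ 2 := by
      intro j
      have : ∀ y : Fin n → Fin b, sampleSum X (Fin.cons j y : Fin (n + 1) → Fin b) ^ 4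
          = X j ^ 4 + (4 * X j ^ 3) * sampleSum X y
            + (6 * X j ^ 2) * (sampleSum X y * sampleSum X y)
            + (4 * X j) * sampleSum X y ^ 3 + sampleSum X y ^ 4 := by
        intro y; rw [sampleSum_cons]; ring
      simp only [this, sampleExp_add, sampleExp_const hw1, sampleExp_const_mul,
        sampleExp_sampleSum hw1 hX, h2]
      have h4 : X j ^ 4 ≤ 1 := by nlinarith [hsq j, sq_nonneg (X j)]
      have h5 : (n : ℝ) * v * X j ^ 2 ≤ n * X j ^ 2 := by
        have : (n : ℝ) * v ≤ n := by nlinarith [(Nat.cast_nonneg n : (0 : ℝ) ≤ n)]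
        exact mul_le_mul_of_nonneg_right this (sq_nonneg _)
      nlinarith [ih]
    calc ∑ j, w j * sampleExp w (fun y : Fin n → Fin b =>
            sampleSum X (Fin.cons j y : Fin (n + 1) → Fin b) ^ 4)
        ≤ ∑ j, w j * (1 + 6 * n * (X j * X j) + 4 * X j * c3 + 3 * (n : ℝ) ^ 2) :=
          Finset.sum_le_sum fun j _ => mul_le_mul_of_nonneg_left (key j) (hw j)
      _ = ∑ j, (w j * (1 + 3 * (n : ℝ) ^ 2) + 6 * n * (w j * (X j * X j))
            + 4 * c3 * (w j * X j)) := Finset.sum_congr rfl fun j _ => by ring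
      _ = (1 + 3 * (n : ℝ) ^ 2) + 6 * n * v + 4 * c3 * 0 := by
          rw [Finset.sum_add_distrib, Finset.sum_add_distrib, ← Finset.sum_mul, ← Finset.mul_sum,
            ← Finset.mul_sum, hw1, hX]; ring
      _ ≤ 3 * ((n + 1 : ℕ) : ℝ) ^ 2 := by
          push_cast
          nlinarith [(Nat.cast_nonneg n : (0 : ℝ) ≤ n)]

/-- The number of occurrences of the outcome `j` in the sample, as a real number. -/
def cnt (y : Fin n → Fin b) (j : Fin b) : ℝ := ∑ i, if y i = j then 1 else 0

/-- The centred count `N_j - n w_j`. -/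
def dev (w : Fin b → ℝ) (y : Fin n → Fin b) (j : Fin b) : ℝ := cnt y j - n * w j

lemma cnt_nonneg (y : Fin n → Fin b) (j : Fin b) : 0 ≤ cnt y j :=
  Finset.sum_nonneg fun i _ => by split_ifs <;> norm_num

lemma sum_comp_eq_cnt (F : Fin b → ℝ) (y : Fin n → Fin b) :
    ∑ i, F (y i) = ∑ j, cnt y j * F j := by
  simp only [cnt, Finset.sum_mul]
  rw [Finset.sum_comm]
  simp

lemma sum_cnt (y : Fin n → Fin b) : ∑ j, cnt y j = n := by
  have := sum_comp_eq_cnt (fun _ => (1 : ℝ)) y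
  simpa using this.symm

lemma cnt_le (y : Fin n → Fin b) (j : Fin b) : cnt y j ≤ n := by
  rw [← sum_cnt y]
  exact Finset.single_le_sum (fun k _ => cnt_nonneg y k) (Finset.mem_univ j)

lemma dev_eq_sampleSum (y : Fin n → Fin b) (j : Fin b) :
    dev w y j = sampleSum (fun k => (if k = j then 1 else 0) - w j) y := by
  simp [dev, cnt, sampleSum, Finset.sum_sub_distrib]

lemma centred_indicator (hw1 : ∑ j, w j = 1) (j : Fin b) :
    ∑ k, w k * ((if k = j then 1 else 0) - w j) = 0 := by
  simp [mul_sub, Finset.sum_sub_distrib, ← Finset.sum_mul, hw1]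

/-- The covariance of the multinomial counts. -/
lemma sampleExp_dev_mul (hw1 : ∑ j, w j = 1) (j k : Fin b) :
    sampleExp w (fun y : Fin n → Fin b => dev w y j * dev w y k)
      = n * ((if j = k then w j else 0) - w j * w k) := by
  simp only [dev_eq_sampleSum]
  rw [sampleExp_sampleSum_mul hw1 (centred_indicator hw1 j) (centred_indicator hw1 k)]
  congr 1
  have : ∀ l, w l * (((if l = j then (1 : ℝ) else 0) - w j) * ((if l = k then 1 else 0) - w k))
      = (if l = j then (if j = k then w j else 0) else 0) - (if l = j then w l * w k else 0)
        - (if l = k then w l * w j else 0) + w l * (w j * w k) := by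
    intro l
    by_cases h1 : l = j
    · subst h1; by_cases h2 : l = k
      · simp [h2]; ring
      · simp [h2]; ring
    · by_cases h2 : l = k
      · subst h2; simp [h1]; ring
      · simp [h1, h2]
  simp only [this, Finset.sum_add_distrib, Finset.sum_sub_distrib, Finset.sum_ite_eq',
    Finset.mem_univ, if_true, ← Finset.sum_mul, hw1]
  ring

lemma weight_le_one (hw : ∀ j, 0 ≤ w j) (hw1 : ∑ j, w j = 1) (j : Fin b) : w j ≤ 1 := by
  rw [← hw1]; exact Finset.single_le_sum (fun k _ => hw k) (Finset.mem_univ j)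

lemma sampleExp_dev_sq_le (hw : ∀ j, 0 ≤ w j) (hw1 : ∑ j, w j = 1) (j : Fin b) :
    sampleExp w (fun y : Fin n → Fin b => dev w y j ^ 2) ≤ n := by
  have := sampleExp_dev_mul (n := n) hw1 j j
  simp only [← pow_two, if_true] at this
  rw [this]
  have h1 := weight_le_one hw hw1 j
  nlinarith [(Nat.cast_nonneg n : (0 : ℝ) ≤ n), hw j]

lemma sampleExp_dev_pow_four_le (hw : ∀ j, 0 ≤ w j) (hw1 : ∑ j, w j = 1) (j : Fin b) :
    sampleExp w (fun y : Fin n → Fin b => dev w y j ^ 4) ≤ 3 * (n : ℝ) ^ 2 := by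
  simp only [dev_eq_sampleSum]
  refine sampleExp_sampleSum_pow_four hw hw1 (centred_indicator hw1 j) fun k => ?_
  have h1 := weight_le_one hw hw1 j
  have h0 := hw j
  rw [abs_le]; split_ifs <;> constructor <;> linarith

lemma sampleExp_abs_dev_le (hw : ∀ j, 0 ≤ w j) (hw1 : ∑ j, w j = 1) (hn : 0 < n) (j : Fin b) :
    sampleExp w (fun y : Fin n → Fin b => |dev w y j|) ≤ √n := by
  have hs : 0 < √(n : ℝ) := Real.sqrt_pos.2 (by exact_mod_cast hn)
  have hsq : √(n : ℝ) * √n = n := Real.mul_self_sqrt (Nat.cast_nonneg n)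
  have hpt : ∀ y : Fin n → Fin b, |dev w y j| ≤ √n / 2 + (1 / (2 * √n)) * dev w y j ^ 2 := by
    intro y
    have : √n / 2 + (1 / (2 * √n)) * dev w y j ^ 2 - |dev w y j|
        = (√n - |dev w y j|) ^ 2 / (2 * √n) := by
      rw [← sq_abs]; field_simp; ring
    have h2 : 0 ≤ (√n - |dev w y j|) ^ 2 / (2 * √n) := by positivity
    linarith
  refine (sampleExp_mono hw hpt).trans ?_
  rw [sampleExp_add, sampleExp_const hw1, sampleExp_const_mul]
  have := mul_le_mul_of_nonneg_left (sampleExp_dev_sq_le (n := n) hw hw1 j)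
    (by positivity : 0 ≤ 1 / (2 * √(n : ℝ)))
  have h3 : 1 / (2 * √(n : ℝ)) * n = √n / 2 := by
    rw [div_mul_eq_mul_div, one_mul, div_eq_div_iff (by positivity) (by norm_num)]
    nlinarith
  linarith

end Moments

/-! ### Gaussian integrals, Fisher matrices and weighted least squares -/

section Gaussian

variable {m : ℕ} {J : Matrix (Fin m) (Fin m) ℝ}

open scoped MatrixOrder Matrix.Norms.L2Operator in
lemma posDef_factor (hJ : J.PosDef) : ∃ M : Matrix (Fin m) (Fin m) ℝ, J = Mᵀ * M := by
  obtain ⟨M, hM⟩ := CStarAlgebra.nonneg_iff_eq_star_mul_self.mp hJ.posSemidef.nonneg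
  exact ⟨M, by rw [hM, star_eq_conjTranspose, conjTranspose_eq_transpose_of_trivial]⟩

lemma continuous_quad (J : Matrix (Fin m) (Fin m) ℝ) :
    Continuous fun u : Fin m → ℝ => u ⬝ᵥ J *ᵥ u :=
  continuous_id.dotProduct (continuous_const.matrix_mulVec continuous_id)

lemma integrable_stdGauss :
    Integrable fun w : Fin m → ℝ => Real.exp (-(1 / 2) * ∑ i, w i ^ 2) := by
  have : (fun w : Fin m → ℝ => Real.exp (-(1 / 2) * ∑ i, w i ^ 2))
      = fun w => ∏ i, Real.exp (-(1 / 2) * w i ^ 2) := by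
    funext w; rw [Finset.mul_sum, Real.exp_sum]
  rw [this]
  exact Integrable.fintype_prod (f := fun _ x => Real.exp (-(1 / 2) * x ^ 2))
    fun _ => integrable_exp_neg_mul_sq (by norm_num)

lemma integral_stdGauss :
    ∫ w : Fin m → ℝ, Real.exp (-(1 / 2) * ∑ i, w i ^ 2) = √(2 * π) ^ m := by
  have : (fun w : Fin m → ℝ => Real.exp (-(1 / 2) * ∑ i, w i ^ 2))
      = fun w => ∏ i, Real.exp (-(1 / 2) * w i ^ 2) := by
    funext w; rw [Finset.mul_sum, Real.exp_sum]
  rw [this, integral_fintype_prod_volume_eq_pow (fun x : ℝ => Real.exp (-(1 / 2) * x ^ 2)),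
    integral_gaussian]
  simp [div_eq_mul_inv, mul_comm]

/-- The multivariate Gaussian integral, together with its convergence. -/
lemma gauss_integral (hJ : J.PosDef) :
    Integrable (fun w : Fin m → ℝ => Real.exp (-(1 / 2) * (w ⬝ᵥ J *ᵥ w))) ∧
    ∫ w : Fin m → ℝ, Real.exp (-(1 / 2) * (w ⬝ᵥ J *ᵥ w)) = √(2 * π) ^ m / √J.det := by
  obtain ⟨M, hM⟩ := posDef_factor hJ
  have hdet : J.det = M.det ^ 2 := by rw [hM, det_mul, det_transpose, pow_two]
  have hMd : M.det ≠ 0 := by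
    intro h; have := hJ.det_pos; rw [hdet, h] at this; norm_num at this
  have hquad : ∀ w : Fin m → ℝ, w ⬝ᵥ J *ᵥ w = ∑ i, (toLin' M w) i ^ 2 := by
    intro w
    rw [hM, ← mulVec_mulVec, dotProduct_mulVec, vecMul_transpose]
    simp [dotProduct, pow_two]
  simp only [hquad]
  have hmap := Real.map_matrix_volume_pi_eq_smul_volume_pi hMd
  have hmeas : Measurable (toLin' M) :=
    (LinearMap.continuous_of_finiteDimensional (toLin' M)).measurable
  have hc : Continuous fun w : Fin m → ℝ => Real.exp (-(1 / 2) * ∑ i, w i ^ 2) := by fun_prop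
  constructor
  · have h1 : Integrable (fun w : Fin m → ℝ => Real.exp (-(1 / 2) * ∑ i, w i ^ 2))
        (Measure.map (toLin' M) volume) := by
      rw [hmap]; exact integrable_stdGauss.smul_measure ENNReal.ofReal_ne_top
    exact h1.comp_measurable hmeas
  · have h2 := integral_map (μ := volume) hmeas.aemeasurable
      (f := fun w : Fin m → ℝ => Real.exp (-(1 / 2) * ∑ i, w i ^ 2))
      hc.aestronglyMeasurable
    rw [← h2, hmap, integral_smul_measure, integral_stdGauss, hdet, Real.sqrt_sq_eq_abs,
      ENNReal.toReal_ofReal (abs_nonneg _), abs_inv, smul_eq_mul]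
    ring

lemma log_gauss_integral (hJ : J.PosDef) :
    Real.log (∫ w : Fin m → ℝ, Real.exp (-(1 / 2) * (w ⬝ᵥ J *ᵥ w)))
      = m / 2 * Real.log (2 * π) - 1 / 2 * Real.log J.det := by
  have h1 : (0 : ℝ) < √(2 * π) := Real.sqrt_pos.2 (by positivity)
  have h2 : 0 < √J.det := Real.sqrt_pos.2 hJ.det_pos
  rw [(gauss_integral hJ).2, Real.log_div (by positivity) h2.ne', Real.log_pow,
    Real.log_sqrt (by positivity), Real.log_sqrt hJ.det_pos.le]
  ring

/-- Tilting a centred Gaussian weight by `exp ⟨s, w⟩` can only increase its mass on a symmetric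
ball: the linear term of `exp x ≥ 1 + x` integrates to zero. -/
lemma tilted_gauss_ge (J : Matrix (Fin m) (Fin m) ℝ) (s : Fin m → ℝ) (r : ℝ) :
    ∫ w in Metric.closedBall (0 : Fin m → ℝ) r, Real.exp (-(1 / 2) * (w ⬝ᵥ J *ᵥ w))
      ≤ ∫ w in Metric.closedBall (0 : Fin m → ℝ) r,
          Real.exp (s ⬝ᵥ w - 1 / 2 * (w ⬝ᵥ J *ᵥ w)) := by
  set D := Metric.closedBall (0 : Fin m → ℝ) r
  have hD : MeasurableSet D := Metric.isClosed_closedBall.measurableSet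
  have hq := continuous_quad J
  have hs : Continuous fun w : Fin m → ℝ => s ⬝ᵥ w := continuous_const.dotProduct continuous_id
  have hE : Continuous fun w : Fin m → ℝ => Real.exp (-(1 / 2) * (w ⬝ᵥ J *ᵥ w)) := by fun_prop
  have hK : IsCompact D := isCompact_closedBall _ _
  have hI : IntegrableOn (fun w : Fin m → ℝ => Real.exp (-(1 / 2) * (w ⬝ᵥ J *ᵥ w))) D :=
    hE.continuousOn.integrableOn_compact hK
  have hI2 : IntegrableOn (fun w : Fin m → ℝ =>
      (s ⬝ᵥ w) * Real.exp (-(1 / 2) * (w ⬝ᵥ J *ᵥ w))) D :=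
    (hs.mul hE).continuousOn.integrableOn_compact hK
  have hodd : ∫ w in D, (s ⬝ᵥ w) * Real.exp (-(1 / 2) * (w ⬝ᵥ J *ᵥ w)) = 0 := by
    rw [← integral_indicator hD]
    set G := D.indicator fun w : Fin m → ℝ =>
      (s ⬝ᵥ w) * Real.exp (-(1 / 2) * (w ⬝ᵥ J *ᵥ w))
    have h1 : ∫ w, G (-w) = ∫ w, G w := integral_neg_eq_self G volume
    have h2 : ∀ w, G (-w) = - G w := by
      intro w
      have : -w ∈ D ↔ w ∈ D := by simp [D]
      by_cases hw : w ∈ D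
      · simp [G, this, hw, mulVec_neg]
      · simp [G, this, hw]
    simp only [h2, integral_neg] at h1
    linarith
  calc ∫ w in D, Real.exp (-(1 / 2) * (w ⬝ᵥ J *ᵥ w))
      = ∫ w in D, (Real.exp (-(1 / 2) * (w ⬝ᵥ J *ᵥ w))
          + (s ⬝ᵥ w) * Real.exp (-(1 / 2) * (w ⬝ᵥ J *ᵥ w))) := by
        rw [integral_add hI hI2, hodd, add_zero]
    _ ≤ _ := by
        refine setIntegral_mono (hI.add hI2) ?_ fun w => ?_
        · exact (Real.continuous_exp.comp (hs.sub (hq.const_mul (1 / 2)))).continuousOn.integrableOn_compact hK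
        · have h1 := Real.add_one_le_exp (s ⬝ᵥ w)
          have h2 : Real.exp (s ⬝ᵥ w - 1 / 2 * (w ⬝ᵥ J *ᵥ w))
              = Real.exp (s ⬝ᵥ w) * Real.exp (-(1 / 2) * (w ⬝ᵥ J *ᵥ w)) := by
            rw [← Real.exp_add]; ring_nf
          simp only [h2]
          nlinarith [Real.exp_pos (-(1 / 2) * (w ⬝ᵥ J *ᵥ w))]

lemma tendsto_ball_gauss (hJ : J.PosDef) :
    Tendsto (fun r : ℝ => ∫ w in Metric.closedBall (0 : Fin m → ℝ) r,
        Real.exp (-(1 / 2) * (w ⬝ᵥ J *ᵥ w))) atTop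
      (nhds (∫ w : Fin m → ℝ, Real.exp (-(1 / 2) * (w ⬝ᵥ J *ᵥ w)))) :=
  (aecover_closedBall (μ := volume) (x := (0 : Fin m → ℝ)) tendsto_id).integral_tendsto_of_countably_generated
    (gauss_integral hJ).1

end Gaussian

section Fisher

variable {m b : ℕ} (B : Matrix (Fin b) (Fin m) ℝ)

/-- The Fisher-type matrix `Bᵀ diag(v)⁻¹ B`. -/
def fisher (v : Fin b → ℝ) : Matrix (Fin m) (Fin m) ℝ :=
  Bᵀ * diagonal (fun j => (v j)⁻¹) * B

/-- The weighted least squares operator `(Bᵀ diag(v)⁻¹ B)⁻¹ Bᵀ diag(v)⁻¹`, a left inverse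
of `B`. -/
def wls (v : Fin b → ℝ) : Matrix (Fin m) (Fin b) ℝ :=
  (fisher B v)⁻¹ * Bᵀ * diagonal (fun j => (v j)⁻¹)

/-- The Gram matrix of the weighted least squares operator in the Fisher metric. -/
def wlsGram (v : Fin b → ℝ) : Matrix (Fin b) (Fin b) ℝ :=
  (wls B v)ᵀ * fisher B v * wls B v

variable {B} {v : Fin b → ℝ}

lemma fisher_mulVec (u : Fin m → ℝ) :
    fisher B v *ᵥ u = Bᵀ *ᵥ (fun j => (v j)⁻¹ * (B *ᵥ u) j) := by
  rw [fisher, ← mulVec_mulVec, ← mulVec_mulVec]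
  congr 1
  funext j
  rw [mulVec_diagonal]

lemma fisher_quad (u : Fin m → ℝ) :
    u ⬝ᵥ fisher B v *ᵥ u = ∑ j, (v j)⁻¹ * (B *ᵥ u) j ^ 2 := by
  rw [fisher_mulVec, dotProduct_mulVec, vecMul_transpose]
  simp only [dotProduct]
  exact Finset.sum_congr rfl fun j _ => by ring

lemma fisher_posDef (hB : Function.Injective B.mulVec) (hv : ∀ j, 0 < v j) :
    (fisher B v).PosDef := by
  refine PosDef.of_dotProduct_mulVec_pos ?_ fun u hu => ?_
  · rw [IsHermitian, conjTranspose_eq_transpose_of_trivial, fisher]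
    simp [transpose_mul, Matrix.mul_assoc]
  · rw [star_trivial, fisher_quad]
    have hBu : B *ᵥ u ≠ 0 := fun h => hu (hB (by simpa using h))
    obtain ⟨j, hj⟩ := Function.ne_iff.1 hBu
    refine Finset.sum_pos' (fun k _ => ?_) ⟨j, Finset.mem_univ j, ?_⟩
    · have := hv k; positivity
    · have := hv j
      have : 0 < (B *ᵥ u) j ^ 2 := by
        have : (B *ᵥ u) j ≠ 0 := hj
        positivity
      have := inv_pos.2 (hv j)
      positivity

lemma fisher_isUnit (hB : Function.Injective B.mulVec) (hv : ∀ j, 0 < v j) :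
    IsUnit (fisher B v).det := (fisher_posDef hB hv).det_pos.ne'.isUnit

lemma wls_mul (hB : Function.Injective B.mulVec) (hv : ∀ j, 0 < v j) : wls B v * B = 1 := by
  rw [wls, Matrix.mul_assoc, Matrix.mul_assoc, ← Matrix.mul_assoc Bᵀ]
  exact nonsing_inv_mul _ (fisher_isUnit hB hv)

lemma fisher_mul_wls (hB : Function.Injective B.mulVec) (hv : ∀ j, 0 < v j) :
    fisher B v * wls B v = Bᵀ * diagonal (fun j => (v j)⁻¹) := by
  rw [wls, Matrix.mul_assoc, ← Matrix.mul_assoc, mul_nonsing_inv _ (fisher_isUnit hB hv), Matrix.one_mul]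

lemma wlsGram_quad (d : Fin b → ℝ) :
    d ⬝ᵥ wlsGram B v *ᵥ d = (wls B v *ᵥ d) ⬝ᵥ fisher B v *ᵥ (wls B v *ᵥ d) := by
  rw [wlsGram, ← mulVec_mulVec, ← mulVec_mulVec, dotProduct_mulVec, vecMul_transpose]

/-- The mean of the normalised quadratic statistic is the number of parameters. -/
lemma sampleExp_wlsGram {n : ℕ} (hB : Function.Injective B.mulVec) (hB0 : ∀ k, ∑ j, B j k = 0)
    (hv : ∀ j, 0 < v j) (hv1 : ∑ j, v j = 1) :
    sampleExp v (fun y : Fin n → Fin b => dev v y ⬝ᵥ wlsGram B v *ᵥ dev v y) = n * m := by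
  have h1 : ∀ y : Fin n → Fin b, dev v y ⬝ᵥ wlsGram B v *ᵥ dev v y
      = ∑ j, ∑ k, wlsGram B v j k * (dev v y j * dev v y k) := by
    intro y
    simp only [dotProduct, mulVec, Finset.mul_sum]
    exact Finset.sum_congr rfl fun j _ => Finset.sum_congr rfl fun k _ => by ring
  simp only [h1, sampleExp_sum, sampleExp_const_mul, sampleExp_dev_mul hv1]
  have h2 : ∑ j, ∑ k, wlsGram B v j k * (n * ((if j = k then v j else 0) - v j * v k))
      = n * ((wlsGram B v * diagonal v).trace - v ⬝ᵥ wlsGram B v *ᵥ v) := by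
    simp only [trace, diag_apply, mul_diagonal, dotProduct, mulVec, Finset.mul_sum, mul_sub,
      Finset.sum_sub_distrib]
    congr 1
    · refine Finset.sum_congr rfl fun j _ => ?_
      rw [Finset.sum_eq_single j]
      · simp; ring
      · intro k _ hk; simp [hk.symm]
      · simp
    · exact Finset.sum_congr rfl fun j _ => Finset.sum_congr rfl fun k _ => by ring
  have h3 : diagonal (fun j => (v j)⁻¹) * diagonal v = (1 : Matrix (Fin b) (Fin b) ℝ) := by
    rw [diagonal_mul_diagonal, ← diagonal_one]
    congr 1; funext j; exact inv_mul_cancel₀ (hv j).ne'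
  have h4 : wls B v *ᵥ v = 0 := by
    rw [wls, ← mulVec_mulVec, ← mulVec_mulVec]
    have : diagonal (fun j => (v j)⁻¹) *ᵥ v = fun _ => 1 := by
      funext j; rw [mulVec_diagonal]; exact inv_mul_cancel₀ (hv j).ne'
    rw [this]
    have : Bᵀ *ᵥ (fun _ => (1 : ℝ)) = 0 := by
      funext k; simp [mulVec, dotProduct, hB0 k]
    rw [this, mulVec_zero]
  have h5 : (wlsGram B v * diagonal v).trace = m := by
    rw [wlsGram, Matrix.mul_assoc, Matrix.mul_assoc, ← Matrix.mul_assoc (fisher B v), fisher_mul_wls hB hv,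
      Matrix.mul_assoc, h3, Matrix.mul_one, ← transpose_mul, trace_transpose, trace_mul_comm, wls_mul hB hv]
    simp
  rw [h2, h5, wlsGram_quad, h4]
  simp

end Fisher

/-! ### The plug-in Gaussian cross-entropy -/

section Plugin

variable {m b : ℕ}

/-- Truncation of a vector from below at level `c`. Applied to empirical frequencies, it keeps the
plug-in Fisher matrix invertible for every sample. -/
def clamp (c : ℝ) (w : Fin b → ℝ) : Fin b → ℝ := fun j => max (w j) c

/-- The empirical frequencies of a sample. -/
def freq {n : ℕ} (y : Fin n → Fin b) : Fin b → ℝ := fun j => cnt y j / n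

lemma clamp_pos {c : ℝ} (hc : 0 < c) (w : Fin b → ℝ) (j : Fin b) : 0 < clamp c w j :=
  lt_max_of_lt_right hc

lemma clamp_eq {c : ℝ} {w : Fin b → ℝ} (hw : ∀ j, c ≤ w j) : clamp c w = w :=
  funext fun j => max_eq_left (hw j)

lemma freq_mem {n : ℕ} (y : Fin n → Fin b) : freq y ∈ Set.Icc (0 : Fin b → ℝ) 1 :=
  ⟨fun j => div_nonneg (cnt_nonneg y j) (Nat.cast_nonneg n),
    fun j => div_le_one_of_le₀ (cnt_le y j) (Nat.cast_nonneg n)⟩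

variable {B : Matrix (Fin b) (Fin m) ℝ} {c : ℝ}

lemma continuous_fisher_clamp (hc : 0 < c) : Continuous fun w => fisher B (clamp c w) := by
  unfold fisher
  refine (continuous_const.matrix_mul (Continuous.matrix_diagonal ?_)).matrix_mul continuous_const
  refine continuous_pi fun j => Continuous.inv₀ ?_ fun w => (clamp_pos hc w j).ne'
  exact (continuous_apply j).max continuous_const

lemma continuous_logdet_clamp (hB : Function.Injective B.mulVec) (hc : 0 < c) :
    Continuous fun w => Real.log (fisher B (clamp c w)).det :=
  (continuous_fisher_clamp hc).matrix_det.log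
    fun w => (fisher_posDef hB (clamp_pos hc w)).det_pos.ne'

lemma continuous_wlsGram_clamp (hB : Function.Injective B.mulVec) (hc : 0 < c) :
    Continuous fun w => wlsGram B (clamp c w) := by
  have h1 := continuous_fisher_clamp (B := B) hc
  have h2 : Continuous fun w => (fisher B (clamp c w))⁻¹ := by
    have : (fun w => (fisher B (clamp c w))⁻¹) = fun w =>
        ((fisher B (clamp c w)).det)⁻¹ • (fisher B (clamp c w)).adjugate := by
      funext w; rw [Matrix.inv_def, Ring.inverse_eq_inv']
    rw [this]
    exact (h1.matrix_det.inv₀ fun w => (fisher_posDef hB (clamp_pos hc w)).det_pos.ne').smul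
      h1.matrix_adjugate
  have h3 : Continuous fun w => wls B (clamp c w) := by
    unfold wls
    refine (h2.matrix_mul continuous_const).matrix_mul (Continuous.matrix_diagonal ?_)
    refine continuous_pi fun j => Continuous.inv₀ ?_ fun w => (clamp_pos hc w j).ne'
    exact (continuous_apply j).max continuous_const
  exact (h3.matrix_transpose.matrix_mul h1).matrix_mul h3

/-- On the unit cube, a continuous function vanishing at `p` is at most `ε` plus a multiple of the
squared distance to `p`: near `p` by continuity, away from `p` because it is bounded. -/
lemma cont_quad_bound {Ψ : (Fin b → ℝ) → ℝ} (hΨ : Continuous Ψ) {p : Fin b → ℝ} (hp : Ψ p = 0)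
    {ε : ℝ} (hε : 0 < ε) :
    ∃ C, 0 ≤ C ∧ ∀ φ ∈ Set.Icc (0 : Fin b → ℝ) 1, |Ψ φ| ≤ ε + C * ∑ j, (φ j - p j) ^ 2 := by
  obtain ⟨δ, hδ, hδ'⟩ := Metric.continuous_iff.1 hΨ p ε hε
  obtain ⟨M, hM⟩ := (isCompact_Icc (a := (0 : Fin b → ℝ)) (b := 1)).exists_bound_of_continuousOn
    hΨ.continuousOn
  refine ⟨max M 0 / δ ^ 2, by positivity, fun φ hφ => ?_⟩
  have hsum : 0 ≤ ∑ j, (φ j - p j) ^ 2 := Finset.sum_nonneg fun j _ => sq_nonneg _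
  have hC : 0 ≤ max M 0 / δ ^ 2 := by positivity
  by_cases hd : dist φ p < δ
  · have := hδ' φ hd
    rw [hp, Real.dist_eq, sub_zero] at this
    nlinarith [mul_nonneg hC hsum]
  · have : ∃ j, δ ≤ dist (φ j) (p j) := by
      by_contra hcon
      push Not at hcon
      exact hd ((dist_pi_lt_iff hδ).2 hcon)
    obtain ⟨j, hj⟩ := this
    have h1 : δ ^ 2 ≤ ∑ j, (φ j - p j) ^ 2 := by
      refine le_trans ?_ (Finset.single_le_sum (f := fun j => (φ j - p j) ^ 2)
        (fun k _ => sq_nonneg _) (Finset.mem_univ j))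
      rw [Real.dist_eq] at hj
      simp only [← sq_abs (φ j - p j)]
      gcongr
    have h2 : max M 0 ≤ max M 0 / δ ^ 2 * ∑ j, (φ j - p j) ^ 2 := by
      rw [div_mul_eq_mul_div, le_div_iff₀ (by positivity)]
      exact mul_le_mul_of_nonneg_left h1 (le_max_right _ _)
    have h3 := hM φ hφ
    rw [Real.norm_eq_abs] at h3
    linarith [le_max_left M 0]

lemma freq_sub {n : ℕ} (hn : 0 < n) (w : Fin b → ℝ) (y : Fin n → Fin b) (j : Fin b) :
    freq y j - w j = dev w y j / n := by
  have : (n : ℝ) ≠ 0 := by exact_mod_cast hn.ne'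
  rw [freq, dev]; field_simp

lemma sq_sum_sq_le (d : Fin b → ℝ) : (∑ j, d j ^ 2) ^ 2 ≤ b * ∑ j, d j ^ 4 := by
  have := sq_sum_le_card_mul_sum_sq (s := Finset.univ) (f := fun j => d j ^ 2)
  simp only [Finset.card_univ, Fintype.card_fin, ← pow_mul] at this
  exact this

/-- The second moment of the centred counts. -/
lemma sampleExp_sum_sq_le {n : ℕ} {w : Fin b → ℝ} (hw : ∀ j, 0 ≤ w j) (hw1 : ∑ j, w j = 1) :
    sampleExp w (fun y : Fin n → Fin b => ∑ j, dev w y j ^ 2) ≤ b * n := by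
  rw [sampleExp_sum]
  refine (Finset.sum_le_sum fun j _ => sampleExp_dev_sq_le hw hw1 j).trans ?_
  simp

lemma sampleExp_sum_sq_sq_le {n : ℕ} {w : Fin b → ℝ} (hw : ∀ j, 0 ≤ w j)
    (hw1 : ∑ j, w j = 1) :
    sampleExp w (fun y : Fin n → Fin b => (∑ j, dev w y j ^ 2) ^ 2) ≤ 3 * b ^ 2 * n ^ 2 := by
  refine (sampleExp_mono hw fun y => sq_sum_sq_le (dev w y)).trans ?_
  rw [sampleExp_const_mul, sampleExp_sum]
  have : ∑ j, sampleExp w (fun y : Fin n → Fin b => dev w y j ^ 4) ≤ b * (3 * (n : ℝ) ^ 2) := by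
    refine (Finset.sum_le_sum fun j _ => sampleExp_dev_pow_four_le hw hw1 j).trans ?_
    simp
  calc _ ≤ (b : ℝ) * (b * (3 * (n : ℝ) ^ 2)) :=
        mul_le_mul_of_nonneg_left this (Nat.cast_nonneg b)
    _ = _ := by ring

/-- Law of large numbers with a weight that is uniformly integrable because of the
fourth-moment bound. -/
lemma tendsto_sampleExp_weighted {w : Fin b → ℝ} (hw : ∀ j, 0 ≤ w j) (hw1 : ∑ j, w j = 1)
    {Ψ : (Fin b → ℝ) → ℝ} (hΨ : Continuous Ψ) (hp : Ψ w = 0) :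
    Tendsto (fun n : ℕ => sampleExp w (fun y : Fin n → Fin b =>
      |Ψ (freq y)| * (1 + (1 / n) * ∑ j, dev w y j ^ 2))) atTop (nhds 0) := by
  rw [Metric.tendsto_atTop]
  intro ε hε
  set e := ε / (2 * (1 + b)) with he
  have hb0 : (0 : ℝ) ≤ b := Nat.cast_nonneg b
  have hepos : 0 < e := by positivity
  obtain ⟨C, hC, hCb⟩ := cont_quad_bound hΨ hp hepos
  obtain ⟨N, hN⟩ := exists_nat_gt (2 * (C * b + 3 * C * b ^ 2) / ε)
  refine ⟨N + 1, fun n hn => ?_⟩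
  have hn0 : 0 < n := by omega
  have hnR : (0 : ℝ) < n := by exact_mod_cast hn0
  have hnN : (N : ℝ) < n := by exact_mod_cast (by omega : N < n)
  have hpt : ∀ y : Fin n → Fin b, |Ψ (freq y)| * (1 + (1 / n) * ∑ j, dev w y j ^ 2)
      ≤ e + (e / n + C / n ^ 2) * (∑ j, dev w y j ^ 2)
        + C / n ^ 3 * (∑ j, dev w y j ^ 2) ^ 2 := by
    intro y
    have h1 := hCb _ (freq_mem y)
    simp only [freq_sub hn0, div_pow, ← Finset.sum_div] at h1
    set s := ∑ j, dev w y j ^ 2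
    have hs : 0 ≤ s := Finset.sum_nonneg fun j _ => sq_nonneg _
    calc _ ≤ (e + C * (s / n ^ 2)) * (1 + (1 / n) * s) :=
          mul_le_mul_of_nonneg_right h1 (by positivity)
      _ = _ := by field_simp; ring
  have hnn : 0 ≤ sampleExp w (fun y : Fin n → Fin b =>
      |Ψ (freq y)| * (1 + (1 / n) * ∑ j, dev w y j ^ 2)) := by
    have := sampleExp_mono (n := n) hw (g := fun _ => 0) (h := fun y =>
      |Ψ (freq y)| * (1 + (1 / n) * ∑ j, dev w y j ^ 2)) fun y => by positivity
    rwa [sampleExp_const hw1] at this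
  rw [Real.dist_eq, sub_zero, abs_of_nonneg hnn]
  refine (sampleExp_mono hw hpt).trans_lt ?_
  rw [sampleExp_add, sampleExp_add, sampleExp_const hw1, sampleExp_const_mul,
    sampleExp_const_mul]
  have h2 := mul_le_mul_of_nonneg_left (sampleExp_sum_sq_le (n := n) hw hw1)
    (by positivity : 0 ≤ e / n + C / n ^ 2)
  have h3 := mul_le_mul_of_nonneg_left (sampleExp_sum_sq_sq_le (n := n) hw hw1)
    (by positivity : 0 ≤ C / (n : ℝ) ^ 3)
  have h4 : e + (e / n + C / n ^ 2) * (b * n) + C / (n : ℝ) ^ 3 * (3 * b ^ 2 * n ^ 2)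
      = e * (1 + b) + (C * b + 3 * C * b ^ 2) / n := by field_simp; ring
  have h5 : e * (1 + b) = ε / 2 := by rw [he]; field_simp
  have h6 : (C * b + 3 * C * b ^ 2) / n < ε / 2 := by
    rw [div_lt_iff₀ hnR]
    rw [div_lt_iff₀ hε] at hN
    nlinarith
  linarith

/-- The (shifted) negative log-density at the true parameter of the plug-in Gaussian
approximation of the posterior, as a function of the sample. -/
def plugin (B : Matrix (Fin b) (Fin m) ℝ) (c : ℝ) (w : Fin b → ℝ) {n : ℕ}
    (y : Fin n → Fin b) : ℝ :=
  -(1 / 2) * Real.log (fisher B (clamp c (freq y))).det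
    + 1 / (2 * n) * (dev w y ⬝ᵥ wlsGram B (clamp c (freq y)) *ᵥ dev w y)

lemma abs_mul_le_sum_sq (d : Fin b → ℝ) (j k : Fin b) : |d j * d k| ≤ ∑ l, d l ^ 2 := by
  have h1 : d j ^ 2 ≤ ∑ l, d l ^ 2 := Finset.single_le_sum (f := fun l => d l ^ 2)
    (fun l _ => sq_nonneg _) (Finset.mem_univ j)
  have h2 : d k ^ 2 ≤ ∑ l, d l ^ 2 := Finset.single_le_sum (f := fun l => d l ^ 2)
    (fun l _ => sq_nonneg _) (Finset.mem_univ k)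
  rw [abs_le]; constructor <;> nlinarith [sq_nonneg (d j - d k), sq_nonneg (d j + d k)]

lemma abs_quad_le (K : Matrix (Fin b) (Fin b) ℝ) (d : Fin b → ℝ) :
    |d ⬝ᵥ K *ᵥ d| ≤ (∑ j, ∑ k, |K j k|) * ∑ l, d l ^ 2 := by
  have e : d ⬝ᵥ K *ᵥ d = ∑ j, ∑ k, d j * (K j k * d k) := by
    simp only [dotProduct, mulVec, Finset.mul_sum]
  rw [e, Finset.sum_mul]
  refine (Finset.abs_sum_le_sum_abs _ _).trans (Finset.sum_le_sum fun j _ => ?_)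
  rw [Finset.sum_mul]
  refine (Finset.abs_sum_le_sum_abs _ _).trans (Finset.sum_le_sum fun k _ => ?_)
  rw [show d j * (K j k * d k) = K j k * (d j * d k) by ring, abs_mul]
  exact mul_le_mul_of_nonneg_left (abs_mul_le_sum_sq d j k) (abs_nonneg _)

/-- The expected plug-in cross-entropy converges to the Gaussian one: replacing the frequencies by
`w` costs an error that vanishes by `tendsto_sampleExp_weighted`, and the mean of the remaining
quadratic form is given exactly by `sampleExp_wlsGram`. -/
lemma tendsto_sampleExp_plugin (hB : Function.Injective B.mulVec) (hB0 : ∀ k, ∑ j, B j k = 0)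
    (hc : 0 < c) {w : Fin b → ℝ} (hw : ∀ j, c ≤ w j) (hw1 : ∑ j, w j = 1) :
    Tendsto (fun n : ℕ => sampleExp w (fun y : Fin n → Fin b => plugin B c w y)) atTop
      (nhds (-(1 / 2) * Real.log (fisher B w).det + m / 2)) := by
  have hwp : ∀ j, 0 < w j := fun j => hc.trans_le (hw j)
  have hw0 : ∀ j, 0 ≤ w j := fun j => (hwp j).le
  set LD := fun φ : Fin b → ℝ => Real.log (fisher B (clamp c φ)).det with hLD
  set K := fun φ : Fin b → ℝ => wlsGram B (clamp c φ) with hK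
  have hLDc : Continuous LD := continuous_logdet_clamp hB hc
  have hKc : Continuous K := continuous_wlsGram_clamp hB hc
  set Ψ : (Fin b → ℝ) → ℝ := fun φ => |LD φ - LD w| + ∑ j, ∑ k, |(K φ - K w) j k| with hΨ
  have hΨc : Continuous Ψ := by
    refine (hLDc.sub continuous_const).abs.add ?_
    refine continuous_finsetSum _ fun j _ => continuous_finsetSum _ fun k _ => ?_
    exact ((hKc.sub continuous_const).matrix_elem j k).abs
  have hΨw : Ψ w = 0 := by simp [hΨ]
  have hlim := tendsto_sampleExp_weighted hw0 hw1 hΨc hΨw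
  rw [tendsto_iff_dist_tendsto_zero]
  refine squeeze_zero' (Eventually.of_forall fun n => dist_nonneg) ?_ hlim
  filter_upwards [eventually_gt_atTop 0] with n hn
  have hnR : (0 : ℝ) < n := by exact_mod_cast hn
  have href : sampleExp w (fun y : Fin n → Fin b =>
      -(1 / 2) * LD w + 1 / (2 * n) * (dev w y ⬝ᵥ K w *ᵥ dev w y))
      = -(1 / 2) * Real.log (fisher B w).det + m / 2 := by
    rw [sampleExp_add, sampleExp_const hw1, sampleExp_const_mul]
    simp only [hLD, hK, clamp_eq hw]
    rw [sampleExp_wlsGram hB hB0 hwp hw1]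
    field_simp
  rw [← href, Real.dist_eq, ← sampleExp_sub]
  have hpt : ∀ y : Fin n → Fin b, |plugin B c w y -
      (-(1 / 2) * LD w + 1 / (2 * n) * (dev w y ⬝ᵥ K w *ᵥ dev w y))|
      ≤ |Ψ (freq y)| * (1 + (1 / n) * ∑ j, dev w y j ^ 2) := by
    intro y
    have e1 : plugin B c w y - (-(1 / 2) * LD w + 1 / (2 * n) * (dev w y ⬝ᵥ K w *ᵥ dev w y))
        = -(1 / 2) * (LD (freq y) - LD w)
          + 1 / (2 * n) * (dev w y ⬝ᵥ (K (freq y) - K w) *ᵥ dev w y) := by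
      rw [sub_mulVec, dotProduct_sub]
      simp only [plugin, hLD, hK]; ring
    rw [e1]
    have h1 := abs_quad_le (K (freq y) - K w) (dev w y)
    set s := ∑ j, dev w y j ^ 2
    have hs : 0 ≤ s := Finset.sum_nonneg fun j _ => sq_nonneg _
    set k := ∑ i, ∑ j, |(K (freq y) - K w) i j|
    have hk : 0 ≤ k := Finset.sum_nonneg fun i _ => Finset.sum_nonneg fun j _ => abs_nonneg _
    have hΨy : |Ψ (freq y)| = |LD (freq y) - LD w| + k := abs_of_nonneg (by positivity)
    rw [hΨy]
    refine (abs_add_le _ _).trans ?_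
    rw [abs_mul, abs_mul, abs_neg, abs_of_pos (by norm_num : (0 : ℝ) < 1 / 2),
      abs_of_pos (by positivity : (0 : ℝ) < 1 / (2 * n))]
    have h2 : 1 / (2 * n) * |dev w y ⬝ᵥ (K (freq y) - K w) *ᵥ dev w y| ≤ 1 / (2 * n) * (k * s) :=
      mul_le_mul_of_nonneg_left h1 (by positivity)
    have h3 : 1 / (2 * (n : ℝ)) * (k * s) = 1 / 2 * (k * ((1 / n) * s)) := by field_simp
    have h4 : 0 ≤ k * ((1 / n) * s) := by positivity
    have h5 : 0 ≤ |LD (freq y) - LD w| * ((1 / n) * s) := by positivity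
    nlinarith [abs_nonneg (LD (freq y) - LD w)]
  calc |sampleExp w _| ≤ sampleExp w (fun y : Fin n → Fin b => |plugin B c w y -
      (-(1 / 2) * LD w + 1 / (2 * n) * (dev w y ⬝ᵥ K w *ᵥ dev w y))|) := by
        unfold sampleExp
        refine (Finset.abs_sum_le_sum_abs _ _).trans (Finset.sum_le_sum fun y _ => ?_)
        rw [abs_mul, abs_of_nonneg (Finset.prod_nonneg fun _ _ => hw0 _)]
    _ ≤ _ := sampleExp_mono hw0 hpt

/-- A bound uniform in the sample size and the true distribution, which provides the dominating
function for the upper bound. -/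
lemma sampleExp_plugin_bound (hB : Function.Injective B.mulVec) (hc : 0 < c) :
    ∃ C, ∀ w : Fin b → ℝ, (∀ j, c ≤ w j) → ∑ j, w j = 1 → ∀ n : ℕ, 0 < n →
      |sampleExp w (fun y : Fin n → Fin b => plugin B c w y)| ≤ C := by
  have hΨ : Continuous fun φ : Fin b → ℝ => |Real.log (fisher B (clamp c φ)).det|
      + ∑ j, ∑ k, |wlsGram B (clamp c φ) j k| := by
    refine (continuous_logdet_clamp hB hc).abs.add ?_
    refine continuous_finsetSum _ fun j _ => continuous_finsetSum _ fun k _ => ?_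
    exact ((continuous_wlsGram_clamp hB hc).matrix_elem j k).abs
  obtain ⟨M, hM⟩ := (isCompact_Icc (a := (0 : Fin b → ℝ)) (b := 1)).exists_bound_of_continuousOn
    hΨ.continuousOn
  refine ⟨|M| + |M| * b, fun w hw hw1 n hn => ?_⟩
  have hw0 : ∀ j, 0 ≤ w j := fun j => (hc.trans_le (hw j)).le
  have hnR : (0 : ℝ) < n := by exact_mod_cast hn
  have hpt : ∀ y : Fin n → Fin b, |plugin B c w y| ≤ |M| + |M| / n * ∑ j, dev w y j ^ 2 := by
    intro y
    have h1 := (hM _ (freq_mem y)).trans (le_abs_self M)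
    rw [Real.norm_eq_abs] at h1
    have h2 := abs_quad_le (wlsGram B (clamp c (freq y))) (dev w y)
    unfold plugin
    set s := ∑ j, dev w y j ^ 2
    have hs : 0 ≤ s := Finset.sum_nonneg fun j _ => sq_nonneg _
    set k := ∑ i, ∑ j, |wlsGram B (clamp c (freq y)) i j|
    have hk : 0 ≤ k := Finset.sum_nonneg fun i _ => Finset.sum_nonneg fun j _ => abs_nonneg _
    rw [abs_of_nonneg (by positivity)] at h1
    refine (abs_add_le _ _).trans ?_
    rw [abs_mul, abs_mul, abs_neg, abs_of_pos (by norm_num : (0 : ℝ) < 1 / 2),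
      abs_of_pos (by positivity : (0 : ℝ) < 1 / (2 * n))]
    have h3 : k ≤ |M| := by linarith [abs_nonneg (Real.log (fisher B (clamp c (freq y))).det)]
    have h4 : 1 / (2 * n) * |dev w y ⬝ᵥ wlsGram B (clamp c (freq y)) *ᵥ dev w y|
        ≤ 1 / (2 * n) * (|M| * s) :=
      mul_le_mul_of_nonneg_left (h2.trans (mul_le_mul_of_nonneg_right h3 hs)) (by positivity)
    have h5 : 1 / (2 * (n : ℝ)) * (|M| * s) = 1 / 2 * (|M| / n * s) := by field_simp
    have h6 : 0 ≤ |M| / n * s := by positivity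
    nlinarith [abs_nonneg (Real.log (fisher B (clamp c (freq y))).det)]
  calc |sampleExp w (fun y : Fin n → Fin b => plugin B c w y)|
      ≤ sampleExp w (fun y : Fin n → Fin b => |plugin B c w y|) := by
        unfold sampleExp
        refine (Finset.abs_sum_le_sum_abs _ _).trans (Finset.sum_le_sum fun y _ => ?_)
        rw [abs_mul, abs_of_nonneg (Finset.prod_nonneg fun _ _ => hw0 _)]
    _ ≤ _ := sampleExp_mono hw0 hpt
    _ ≤ |M| + |M| / n * (b * n) := by
        rw [sampleExp_add, sampleExp_const hw1, sampleExp_const_mul]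
        have := mul_le_mul_of_nonneg_left (sampleExp_sum_sq_le (n := n) hw0 hw1)
          (by positivity : 0 ≤ |M| / n)
        linarith
    _ = _ := by field_simp

end Plugin

/-! ### Gibbs' inequality and two-sided bounds for the conditional entropy -/

section Corner

variable {m : ℕ}

lemma isClosed_stdCorner (m : ℕ) : IsClosed (stdCorner m) := by
  have : stdCorner m = (⋂ i, {q | 0 ≤ q i}) ∩ {q | ∑ i, q i ≤ 1} := by
    ext q; simp [stdCorner]
  rw [this]
  exact (isClosed_iInter fun i => isClosed_le continuous_const (continuous_apply i)).inter
    (isClosed_le (continuous_finsetSum _ fun i _ => continuous_apply i) continuous_const)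

lemma stdCorner_subset (m : ℕ) : stdCorner m ⊆ Set.Icc 0 1 := fun _ hq =>
  ⟨fun i => hq.1 i, fun i =>
    (Finset.single_le_sum (fun k _ => hq.1 k) (Finset.mem_univ i)).trans hq.2⟩

lemma isCompact_stdCorner (m : ℕ) : IsCompact (stdCorner m) :=
  isCompact_Icc.of_isClosed_subset (isClosed_stdCorner m) (stdCorner_subset m)

lemma convex_stdCorner (m : ℕ) : Convex ℝ (stdCorner m) := by
  intro p hp q hq s t hs ht hst
  refine ⟨fun i => ?_, ?_⟩
  · have := hp.1 i; have := hq.1 i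
    simp only [Pi.add_apply, Pi.smul_apply, smul_eq_mul]; positivity
  · simp only [Pi.add_apply, Pi.smul_apply, smul_eq_mul, Finset.sum_add_distrib,
      ← Finset.mul_sum]
    nlinarith [hp.2, hq.2]

lemma measurableSet_stdCorner (m : ℕ) : MeasurableSet (stdCorner m) :=
  (isClosed_stdCorner m).measurableSet

end Corner

section Gibbs

lemma mul_log_ge (x ρ : ℝ) (hx : 0 ≤ x) : x * ρ + x - Real.exp ρ ≤ x * Real.log x := by
  rcases hx.eq_or_lt with rfl | hx
  · simp [(Real.exp_pos ρ).le]
  · have h1 := Real.add_one_le_exp (ρ - Real.log x)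
    rw [Real.exp_sub, Real.exp_log hx, le_div_iff₀ hx] at h1
    linarith

/-- Gibbs' inequality for densities on a compact set: the entropy is at most the cross-entropy
with respect to any sub-probability density `exp ρ`. -/
lemma gibbs {m : ℕ} {K : Set (Fin m → ℝ)} (hK : IsCompact K) {g ρ : (Fin m → ℝ) → ℝ}
    (hg : ContinuousOn g K) (hg0 : ∀ q ∈ K, 0 ≤ g q) (hg1 : ∫ q in K, g q = 1)
    (hρ : ContinuousOn ρ K) (hρ1 : ∫ q in K, Real.exp (ρ q) ≤ 1) :
    -(∫ q in K, g q * Real.log (g q)) ≤ ∫ q in K, g q * (-ρ q) := by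
  have i1 : IntegrableOn (fun q => g q * Real.log (g q)) K :=
    (Real.continuous_mul_log.comp_continuousOn hg).integrableOn_compact hK
  have i2 : IntegrableOn (fun q => g q * ρ q) K := (hg.mul hρ).integrableOn_compact hK
  have i3 : IntegrableOn g K := hg.integrableOn_compact hK
  have i4 : IntegrableOn (fun q => Real.exp (ρ q)) K :=
    (Real.continuous_exp.comp_continuousOn hρ).integrableOn_compact hK
  have h := setIntegral_mono_on ((i2.add i3).sub i4) i1 hK.measurableSet
    fun q hq => mul_log_ge (g q) (ρ q) (hg0 q hq)
  have i23 : IntegrableOn (fun q => g q * ρ q + g q) K := i2.add i3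
  simp only [Pi.add_apply, Pi.sub_apply] at h
  rw [integral_sub i23 i4, integral_add i2 i3, hg1] at h
  simp only [mul_neg, integral_neg]
  linarith

end Gibbs

section Model

variable {m b : ℕ}

/-- The distribution of one observation, as an affine function of the parameter. -/
def prb (B : Matrix (Fin b) (Fin m) ℝ) (c₀ : Fin b → ℝ) (q : Fin m → ℝ) : Fin b → ℝ :=
  c₀ + B *ᵥ q

/-- An identifiable affine family `q ↦ c₀ + B q` of probability vectors on the corner simplex,
with all probabilities at least `c > 0`. -/
structure LinModel (B : Matrix (Fin b) (Fin m) ℝ) (c₀ : Fin b → ℝ) (c : ℝ) : Prop where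
  c_pos : 0 < c
  col_sum : ∀ k, ∑ j, B j k = 0
  total : ∑ j, c₀ j = 1
  lower : ∀ q ∈ stdCorner m, ∀ j, c ≤ prb B c₀ q j
  inj : Function.Injective B.mulVec

/-- The marginal probability of the sample `y` under the prior density `f`. -/
def mixC (B : Matrix (Fin b) (Fin m) ℝ) (c₀ : Fin b → ℝ) (f : (Fin m → ℝ) → ℝ) {n : ℕ}
    (y : Fin n → Fin b) : ℝ :=
  ∫ q in stdCorner m, f q * ∏ i, prb B c₀ q (y i)

/-- The posterior density of the parameter. -/
def postG (B : Matrix (Fin b) (Fin m) ℝ) (c₀ : Fin b → ℝ) (f : (Fin m → ℝ) → ℝ) {n : ℕ}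
    (y : Fin n → Fin b) (q : Fin m → ℝ) : ℝ :=
  (f q * ∏ i, prb B c₀ q (y i)) / mixC B c₀ f y

/-- The conditional differential entropy of the parameter given a sample of size `n`. -/
def condH (B : Matrix (Fin b) (Fin m) ℝ) (c₀ : Fin b → ℝ) (f : (Fin m → ℝ) → ℝ) (n : ℕ) : ℝ :=
  ∑ y : Fin n → Fin b,
    mixC B c₀ f y * (-(∫ q in stdCorner m, postG B c₀ f y q * Real.log (postG B c₀ f y q)))

variable {B : Matrix (Fin b) (Fin m) ℝ} {c₀ : Fin b → ℝ} {c : ℝ} {n : ℕ}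

lemma continuous_prb : Continuous (prb B c₀) :=
  continuous_const.add (continuous_const.matrix_mulVec continuous_id)

lemma continuous_lik (y : Fin n → Fin b) : Continuous fun q => ∏ i, prb B c₀ q (y i) :=
  continuous_finsetProd _ fun i _ => (continuous_apply (y i)).comp continuous_prb

lemma prb_sum (hM : LinModel B c₀ c) (q : Fin m → ℝ) : ∑ j, prb B c₀ q j = 1 := by
  simp only [prb, Pi.add_apply, Finset.sum_add_distrib, hM.total, mulVec, dotProduct]
  rw [Finset.sum_comm]
  simp [← Finset.sum_mul, hM.col_sum]

lemma prb_pos (hM : LinModel B c₀ c) {q : Fin m → ℝ} (hq : q ∈ stdCorner m) (j : Fin b) :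
    0 < prb B c₀ q j := hM.c_pos.trans_le (hM.lower q hq j)

lemma lik_pos (hM : LinModel B c₀ c) {q : Fin m → ℝ} (hq : q ∈ stdCorner m)
    (y : Fin n → Fin b) : 0 < ∏ i, prb B c₀ q (y i) :=
  Finset.prod_pos fun _ _ => prb_pos hM hq _

lemma continuousOn_post {f : (Fin m → ℝ) → ℝ} (hf : ContinuousOn f (stdCorner m))
    (y : Fin n → Fin b) :
    ContinuousOn (fun q => f q * ∏ i, prb B c₀ q (y i)) (stdCorner m) :=
  hf.mul (continuous_lik y).continuousOn

lemma mixC_pos (hM : LinModel B c₀ c) {f : (Fin m → ℝ) → ℝ}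
    (hf : ContinuousOn f (stdCorner m)) (hf0 : ∀ q, 0 ≤ f q)
    (hf1 : 0 < ∫ q in stdCorner m, f q) (y : Fin n → Fin b) : 0 < mixC B c₀ f y := by
  have hK := isCompact_stdCorner m
  have hcn : 0 < c ^ n := pow_pos hM.c_pos n
  refine (mul_pos hf1 hcn).trans_le ?_
  rw [← integral_mul_const]
  refine setIntegral_mono_on ((hf.mul continuousOn_const).integrableOn_compact hK)
    ((continuousOn_post hf y).integrableOn_compact hK) hK.measurableSet fun q hq => ?_
  refine mul_le_mul_of_nonneg_left ?_ (hf0 q)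
  have := Finset.prod_le_prod (s := (Finset.univ : Finset (Fin n))) (f := fun _ => c)
    (g := fun i => prb B c₀ q (y i)) (fun _ _ => hM.c_pos.le) fun i _ => hM.lower q hq (y i)
  simpa using this

/-- Summing over all samples turns the joint integrals into an integral of expectations. -/
lemma sum_integral_sampleExp {f : (Fin m → ℝ) → ℝ}
    {G : (Fin n → Fin b) → (Fin m → ℝ) → ℝ} (hf : ContinuousOn f (stdCorner m))
    (hG : ∀ y, ContinuousOn (G y) (stdCorner m)) :
    ∑ y : Fin n → Fin b, ∫ q in stdCorner m, (f q * ∏ i, prb B c₀ q (y i)) * G y q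
      = ∫ q in stdCorner m, f q * sampleExp (prb B c₀ q) (fun y => G y q) := by
  rw [← integral_finsetSum]
  · simp only [sampleExp, Finset.mul_sum, mul_assoc]
  · intro y _
    exact ((continuousOn_post hf y).mul (hG y)).integrableOn_compact (isCompact_stdCorner m)

lemma sum_mixC (hM : LinModel B c₀ c) {f : (Fin m → ℝ) → ℝ}
    (hf : ContinuousOn f (stdCorner m)) :
    ∑ y : Fin n → Fin b, mixC B c₀ f y = ∫ q in stdCorner m, f q := by
  have := sum_integral_sampleExp (B := B) (c₀ := c₀) (n := n) (G := fun _ _ => 1) hf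
    fun _ => continuousOn_const
  simp only [mul_one, sampleExp_const (prb_sum hM _)] at this
  exact this

lemma continuous_dev_quad (K : Matrix (Fin b) (Fin b) ℝ) (y : Fin n → Fin b) :
    Continuous fun q => dev (prb B c₀ q) y ⬝ᵥ K *ᵥ dev (prb B c₀ q) y := by
  have h : Continuous fun q => dev (prb B c₀ q) y :=
    continuous_pi fun j => continuous_const.sub
      (continuous_const.mul ((continuous_apply j).comp continuous_prb))
  exact h.dotProduct (continuous_const.matrix_mulVec h)

lemma continuous_plugin (y : Fin n → Fin b) :
    Continuous fun q => plugin B c (prb B c₀ q) y :=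
  continuous_const.add (continuous_const.mul (continuous_dev_quad _ y))

/-- For each sample, the plug-in Gaussian centred at the weighted least squares estimator has
negative log-density `plugin + (m/2) log (2π) - (m/2) log n`, so its mass on the corner simplex is
at most one. -/
lemma plugin_density (hM : LinModel B c₀ c) (hn : 0 < n) (y : Fin n → Fin b) :
    ∫ q in stdCorner m, Real.exp (-(plugin B c (prb B c₀ q) y
      + (m / 2 * Real.log (2 * π) - m / 2 * Real.log n))) ≤ 1 := by
  have hnR : (0 : ℝ) < n := by exact_mod_cast hn
  set v := clamp c (freq y) with hv
  have hvp : ∀ j, 0 < v j := clamp_pos hM.c_pos _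
  set J := fisher B v with hJdef
  have hJ : J.PosDef := fisher_posDef hM.inj hvp
  have hA : ((n : ℝ) • J).PosDef := hJ.smul hnR
  set qh := wls B v *ᵥ (freq y - c₀) with hqh
  set Z := ∫ w : Fin m → ℝ, Real.exp (-(1 / 2) * (w ⬝ᵥ ((n : ℝ) • J) *ᵥ w)) with hZ
  have hZpos : 0 < Z := by
    rw [hZ, (gauss_integral hA).2]
    have := hA.det_pos
    positivity
  have hlogZ : Real.log Z = m / 2 * Real.log (2 * π)
      - (m / 2 * Real.log n + 1 / 2 * Real.log J.det) := by
    rw [hZ, log_gauss_integral hA, det_smul, Fintype.card_fin,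
      Real.log_mul (by positivity) hJ.det_pos.ne', Real.log_pow]
    ring
  have hdiff : ∀ q, q - qh = -((1 / (n : ℝ)) • (wls B v *ᵥ dev (prb B c₀ q) y)) := by
    intro q
    have h1 : dev (prb B c₀ q) y = (n : ℝ) • ((freq y - c₀) - B *ᵥ q) := by
      funext j
      simp only [dev, prb, freq, Pi.smul_apply, Pi.sub_apply, Pi.add_apply, smul_eq_mul]
      field_simp; ring
    rw [h1, mulVec_smul, mulVec_sub, mulVec_mulVec, wls_mul hM.inj hvp, one_mulVec, smul_smul,
      one_div, inv_mul_cancel₀ hnR.ne', one_smul]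
    simp [hqh]
  have hexp : ∀ q, Real.exp (-(plugin B c (prb B c₀ q) y
      + (m / 2 * Real.log (2 * π) - m / 2 * Real.log n)))
      = Real.exp (-(1 / 2) * ((q - qh) ⬝ᵥ ((n : ℝ) • J) *ᵥ (q - qh))) / Z := by
    intro q
    rw [← Real.exp_log hZpos, ← Real.exp_sub, hlogZ, hdiff q]
    congr 1
    simp only [plugin, ← hv, wlsGram_quad, ← hJdef, mulVec_neg, mulVec_smul, smul_mulVec,
      neg_dotProduct, dotProduct_neg, smul_dotProduct, dotProduct_smul, smul_eq_mul]
    field_simp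
    ring
  simp only [hexp]
  have hint : Integrable fun q : Fin m → ℝ =>
      Real.exp (-(1 / 2) * ((q - qh) ⬝ᵥ ((n : ℝ) • J) *ᵥ (q - qh))) / Z :=
    ((gauss_integral hA).1.comp_sub_right qh).div_const Z
  refine (setIntegral_le_integral hint (Eventually.of_forall fun q => by positivity)).trans ?_
  rw [integral_div, integral_sub_right_eq_self
    (fun q : Fin m → ℝ => Real.exp (-(1 / 2) * (q ⬝ᵥ ((n : ℝ) • J) *ᵥ q))) qh, ← hZ,
    div_self hZpos.ne']

/-- Upper bound for the conditional entropy by the expected plug-in cross-entropy: `gibbs` is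
applied to each posterior density and the plug-in Gaussian of `plugin_density`. -/
lemma condH_le (hM : LinModel B c₀ c) {f : (Fin m → ℝ) → ℝ}
    (hf : ContinuousOn f (stdCorner m)) (hf0 : ∀ q, 0 ≤ f q)
    (hf1 : ∫ q in stdCorner m, f q = 1) (hn : 0 < n) :
    condH B c₀ f n + m / 2 * Real.log n ≤ m / 2 * Real.log (2 * π)
      + ∫ q in stdCorner m, f q *
          sampleExp (prb B c₀ q) (fun y : Fin n → Fin b => plugin B c (prb B c₀ q) y) := by
  have hK := isCompact_stdCorner m
  set κ : ℝ := m / 2 * Real.log (2 * π) - m / 2 * Real.log n with hκ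
  have hy : ∀ y : Fin n → Fin b,
      mixC B c₀ f y * (-(∫ q in stdCorner m, postG B c₀ f y q * Real.log (postG B c₀ f y q)))
      ≤ ∫ q in stdCorner m, (f q * ∏ i, prb B c₀ q (y i)) *
          (plugin B c (prb B c₀ q) y + κ) := by
    intro y
    have hC := mixC_pos hM hf hf0 (by rw [hf1]; norm_num) y
    have hg := gibbs hK (g := postG B c₀ f y)
      (ρ := fun q => -(plugin B c (prb B c₀ q) y + κ))
      ((continuousOn_post hf y).div_const _)
      (fun q hq => div_nonneg (mul_nonneg (hf0 q) (lik_pos hM hq y).le) hC.le)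
      (by
        unfold postG
        rw [integral_div]
        exact div_self hC.ne')
      ((continuous_plugin y).add continuous_const).neg.continuousOn
      (plugin_density hM hn y)
    refine (mul_le_mul_of_nonneg_left hg hC.le).trans (le_of_eq ?_)
    rw [← integral_const_mul]
    congr 1
    funext q
    rw [neg_neg, postG]
    field_simp
  have hsum := Finset.sum_le_sum fun y (_ : y ∈ (Finset.univ : Finset (Fin n → Fin b))) => hy y
  rw [sum_integral_sampleExp (B := B) (c₀ := c₀) (n := n)
    (G := fun y q => plugin B c (prb B c₀ q) y + κ) hf
    fun y => ((continuous_plugin y).add continuous_const).continuousOn] at hsum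
  simp only [sampleExp_add, sampleExp_const (prb_sum hM _), mul_add] at hsum
  rw [integral_add, integral_mul_const, hf1] at hsum
  · have : condH B c₀ f n ≤ _ := hsum
    linarith
  · refine ContinuousOn.integrableOn_compact hK (hf.mul ?_)
    refine Continuous.continuousOn ?_
    exact continuous_finsetSum _ fun y _ => (continuous_lik y).mul (continuous_plugin y)
  · exact (hf.mul continuousOn_const).integrableOn_compact hK

/-- Lower bound for the conditional entropy: the marginal of the sample is replaced by the
mixture with respect to another (unnormalised) prior `f'`, using Gibbs' inequality on the finite
set of samples. -/
lemma condH_ge (hM : LinModel B c₀ c) {f f' : (Fin m → ℝ) → ℝ}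
    (hf : ContinuousOn f (stdCorner m)) (hf0 : ∀ q, 0 ≤ f q)
    (hf1 : ∫ q in stdCorner m, f q = 1)
    (hf' : ContinuousOn f' (stdCorner m)) (hf'0 : ∀ q, 0 ≤ f' q)
    (hf'1 : 0 < ∫ q in stdCorner m, f' q) :
    (∫ q in stdCorner m, f q * sampleExp (prb B c₀ q) (fun y : Fin n → Fin b =>
        Real.log (mixC B c₀ f' y) - Real.log (∏ i, prb B c₀ q (y i))))
      - (∫ q in stdCorner m, f q * Real.log (f q))
      - Real.log (∫ q in stdCorner m, f' q) ≤ condH B c₀ f n := by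
  have hK := isCompact_stdCorner m
  set Z := ∫ q in stdCorner m, f' q with hZ
  have hC : ∀ y : Fin n → Fin b, 0 < mixC B c₀ f y :=
    mixC_pos hM hf hf0 (by rw [hf1]; norm_num)
  have hC' : ∀ y : Fin n → Fin b, 0 < mixC B c₀ f' y := mixC_pos hM hf' hf'0 hf'1
  have hlogL : ∀ y : Fin n → Fin b,
      ContinuousOn (fun q => Real.log (∏ i, prb B c₀ q (y i))) (stdCorner m) := fun y =>
    (continuous_lik y).continuousOn.log fun q hq => (lik_pos hM hq y).ne'
  have hflf : ContinuousOn (fun q => f q * Real.log (f q)) (stdCorner m) :=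
    Real.continuous_mul_log.comp_continuousOn hf
  -- `log` of the posterior density splits into prior, likelihood and marginal
  have hterm : ∀ y : Fin n → Fin b,
      mixC B c₀ f y * (-(∫ q in stdCorner m, postG B c₀ f y q * Real.log (postG B c₀ f y q)))
      = mixC B c₀ f y * Real.log (mixC B c₀ f y)
        - (∫ q in stdCorner m, (f q * ∏ i, prb B c₀ q (y i)) *
            Real.log (∏ i, prb B c₀ q (y i)))
        - ∫ q in stdCorner m, (f q * Real.log (f q)) * ∏ i, prb B c₀ q (y i) := by
    intro y
    have hpt : ∀ q ∈ stdCorner m,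
        mixC B c₀ f y * (postG B c₀ f y q * Real.log (postG B c₀ f y q))
        = ((f q * ∏ i, prb B c₀ q (y i)) * Real.log (∏ i, prb B c₀ q (y i))
          + (f q * Real.log (f q)) * ∏ i, prb B c₀ q (y i))
          - (f q * ∏ i, prb B c₀ q (y i)) * Real.log (mixC B c₀ f y) := by
      intro q hq
      have hL := lik_pos hM hq y
      rcases (hf0 q).eq_or_lt with h0 | h0
      · simp [postG, ← h0]
      · rw [postG, Real.log_div (by positivity) (hC y).ne', Real.log_mul h0.ne' hL.ne']
        have := (hC y).ne'
        field_simp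
        ring
    have i1 : IntegrableOn (fun q => (f q * ∏ i, prb B c₀ q (y i)) *
        Real.log (∏ i, prb B c₀ q (y i))) (stdCorner m) :=
      ((continuousOn_post hf y).mul (hlogL y)).integrableOn_compact hK
    have i2 : IntegrableOn (fun q => (f q * Real.log (f q)) * ∏ i, prb B c₀ q (y i))
        (stdCorner m) := (hflf.mul (continuous_lik y).continuousOn).integrableOn_compact hK
    have i12 : IntegrableOn (fun q => (f q * ∏ i, prb B c₀ q (y i)) *
        Real.log (∏ i, prb B c₀ q (y i)) + (f q * Real.log (f q)) * ∏ i, prb B c₀ q (y i))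
        (stdCorner m) := i1.add i2
    have i3 : IntegrableOn (fun q => (f q * ∏ i, prb B c₀ q (y i)) *
        Real.log (mixC B c₀ f y)) (stdCorner m) :=
      ((continuousOn_post hf y).mul continuousOn_const).integrableOn_compact hK
    rw [mul_neg, ← integral_const_mul, setIntegral_congr_fun hK.measurableSet hpt,
      integral_sub i12 i3, integral_add i1 i2, integral_mul_const]
    simp only [mixC]
    ring
  have hs1 := sum_integral_sampleExp (B := B) (c₀ := c₀) (n := n)
    (G := fun y q => Real.log (∏ i, prb B c₀ q (y i))) hf hlogL
  have hs2 : ∑ y : Fin n → Fin b,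
      ∫ q in stdCorner m, (f q * Real.log (f q)) * ∏ i, prb B c₀ q (y i)
      = ∫ q in stdCorner m, f q * Real.log (f q) := sum_mixC hM hflf
  have hs3 : ∑ y : Fin n → Fin b, mixC B c₀ f y = 1 := (sum_mixC hM hf).trans hf1
  have hs4 : ∑ y : Fin n → Fin b, mixC B c₀ f' y = Z := sum_mixC hM hf'
  have hs5 := sum_integral_sampleExp (B := B) (c₀ := c₀) (n := n)
    (G := fun y _ => Real.log (mixC B c₀ f' y)) hf fun _ => continuousOn_const
  have hgibbs : ∑ y : Fin n → Fin b, mixC B c₀ f y * Real.log (mixC B c₀ f' y) - Real.log Z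
      ≤ ∑ y : Fin n → Fin b, mixC B c₀ f y * Real.log (mixC B c₀ f y) := by
    have h := Finset.sum_le_sum fun y (_ : y ∈ (Finset.univ : Finset (Fin n → Fin b))) =>
      mul_log_ge (mixC B c₀ f y) (Real.log (mixC B c₀ f' y / Z)) (hC y).le
    have e : ∀ y : Fin n → Fin b, mixC B c₀ f y * Real.log (mixC B c₀ f' y / Z)
        + mixC B c₀ f y - Real.exp (Real.log (mixC B c₀ f' y / Z))
        = mixC B c₀ f y * Real.log (mixC B c₀ f' y) - mixC B c₀ f y * Real.log Z
          + mixC B c₀ f y - mixC B c₀ f' y / Z := by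
      intro y
      rw [Real.exp_log (div_pos (hC' y) hf'1), Real.log_div (hC' y).ne' hf'1.ne']; ring
    simp only [e] at h
    rw [Finset.sum_sub_distrib, Finset.sum_add_distrib, Finset.sum_sub_distrib,
      ← Finset.sum_mul, ← Finset.sum_div, hs3, hs4, div_self hf'1.ne'] at h
    linarith
  have hs6 : ∫ q in stdCorner m, f q * sampleExp (prb B c₀ q) (fun y : Fin n → Fin b =>
        Real.log (mixC B c₀ f' y) - Real.log (∏ i, prb B c₀ q (y i)))
      = ∑ y : Fin n → Fin b, mixC B c₀ f y * Real.log (mixC B c₀ f' y)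
        - ∑ y : Fin n → Fin b, ∫ q in stdCorner m, (f q * ∏ i, prb B c₀ q (y i)) *
            Real.log (∏ i, prb B c₀ q (y i)) := by
    rw [← sum_integral_sampleExp (B := B) (c₀ := c₀) (n := n)
      (G := fun y q => Real.log (mixC B c₀ f' y) - Real.log (∏ i, prb B c₀ q (y i))) hf
      fun y => continuousOn_const.sub (hlogL y), ← Finset.sum_sub_distrib]
    refine Finset.sum_congr rfl fun y _ => ?_
    have i1 : IntegrableOn (fun q => (f q * ∏ i, prb B c₀ q (y i)) *
        Real.log (∏ i, prb B c₀ q (y i))) (stdCorner m) :=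
      ((continuousOn_post hf y).mul (hlogL y)).integrableOn_compact hK
    have i3 : IntegrableOn (fun q => (f q * ∏ i, prb B c₀ q (y i)) *
        Real.log (mixC B c₀ f' y)) (stdCorner m) :=
      ((continuousOn_post hf y).mul continuousOn_const).integrableOn_compact hK
    simp only [mul_sub]
    rw [integral_sub i3 i1, integral_mul_const]
    rfl
  rw [condH]
  simp only [hterm, Finset.sum_sub_distrib]
  rw [hs6, hs2]
  linarith

end Model

/-! ### Local lower bounds for the likelihood -/

section Local

variable {m b : ℕ} {B : Matrix (Fin b) (Fin m) ℝ} {c₀ : Fin b → ℝ} {c : ℝ} {n : ℕ}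

/-- The mixture integral is bounded below by its part over the image of `U` under
`u ↦ q + s u`. -/
lemma mixC_ge (hM : LinModel B c₀ c) {f : (Fin m → ℝ) → ℝ}
    (hf : ContinuousOn f (stdCorner m)) (hf0 : ∀ q, 0 ≤ f q) (y : Fin n → Fin b)
    {q : Fin m → ℝ} {s : ℝ} (hs : 0 < s) {U : Set (Fin m → ℝ)} (hU : MeasurableSet U)
    (hUΔ : ∀ u ∈ U, q + s • u ∈ stdCorner m) {φ : (Fin m → ℝ) → ℝ} (hφ : IntegrableOn φ U)
    (hφle : ∀ u ∈ U, φ u ≤ f (q + s • u) * ∏ i, prb B c₀ (q + s • u) (y i)) :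
    s ^ m * ∫ u in U, φ u ≤ mixC B c₀ f y := by
  set h := fun q => f q * ∏ i, prb B c₀ q (y i) with hh
  set G := (stdCorner m).indicator h with hG
  have hGint : Integrable G := by
    rw [hG, integrable_indicator_iff (measurableSet_stdCorner m)]
    exact (continuousOn_post hf y).integrableOn_compact (isCompact_stdCorner m)
  have hG0 : ∀ q, 0 ≤ G q := fun q => Set.indicator_nonneg
    (fun q hq => mul_nonneg (hf0 q) (lik_pos hM hq y).le) q
  have h1 : Integrable fun u => G (q + s • u) :=
    (hGint.comp_add_left q).comp_smul hs.ne'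
  have h2 : ∫ u, G (q + s • u) = (s ^ m)⁻¹ * ∫ q, G q := by
    have e := Measure.integral_comp_smul (volume : Measure (Fin m → ℝ))
      (fun u => G (q + u)) s
    rw [e, integral_add_left_eq_self G q]
    simp [abs_of_pos hs]
  have h3 : ∫ u in U, φ u ≤ ∫ u in U, G (q + s • u) :=
    setIntegral_mono_on hφ h1.integrableOn hU fun u hu =>
      (hφle u hu).trans (Set.indicator_of_mem (hUΔ u hu) h).ge
  have h4 : ∫ u in U, G (q + s • u) ≤ ∫ u, G (q + s • u) :=
    setIntegral_le_integral h1 (Eventually.of_forall fun u => hG0 _)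
  have h5 : ∫ q, G q = mixC B c₀ f y := integral_indicator (measurableSet_stdCorner m)
  have hsm : 0 < s ^ m := pow_pos hs m
  calc s ^ m * ∫ u in U, φ u ≤ s ^ m * ((s ^ m)⁻¹ * mixC B c₀ f y) := by
        rw [← h5, ← h2]; exact mul_le_mul_of_nonneg_left (h3.trans h4) hsm.le
    _ = mixC B c₀ f y := by field_simp

lemma lik_ge {w w' ψ : Fin b → ℝ} (hw : ∀ j, 0 ≤ w j) (h : ∀ j, w j * Real.exp (ψ j) ≤ w' j)
    (y : Fin n → Fin b) :
    (∏ i, w (y i)) * Real.exp (∑ j, cnt y j * ψ j) ≤ ∏ i, w' (y i) := by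
  rw [← sum_comp_eq_cnt, Real.exp_sum, ← Finset.prod_mul_distrib]
  exact Finset.prod_le_prod (fun i _ => mul_nonneg (hw _) (Real.exp_pos _).le) fun i _ => h _

lemma sum_mulVec (hM : LinModel B c₀ c) (u : Fin m → ℝ) : ∑ j, (B *ᵥ u) j = 0 := by
  simp only [mulVec, dotProduct]
  rw [Finset.sum_comm]
  simp [← Finset.sum_mul, hM.col_sum]

lemma sum_cnt_mul {w x : Fin b → ℝ} (hx : ∑ j, w j * x j = 0) (y : Fin n → Fin b) :
    ∑ j, cnt y j * x j = ∑ j, dev w y j * x j := by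
  simp only [dev, sub_mul, Finset.sum_sub_distrib, mul_assoc, ← Finset.mul_sum, hx]
  ring

lemma prb_add (q : Fin m → ℝ) (s : ℝ) (u : Fin m → ℝ) (j : Fin b) :
    prb B c₀ (q + s • u) j = prb B c₀ q j + s * (B *ᵥ u) j := by
  simp [prb, mulVec_add, mulVec_smul, add_assoc]

lemma log_one_add_ge {x : ℝ} (hx : |x| ≤ 1 / 2) :
    x - x ^ 2 / 2 - 2 * |x| ^ 3 ≤ Real.log (1 + x) := by
  have h := Real.abs_log_sub_add_sum_range_le (x := -x) (by rw [abs_neg]; linarith) 2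
  simp only [Finset.sum_range_succ, Finset.sum_range_zero, abs_neg, sub_neg_eq_add] at h
  have h2 : |x| ^ (2 + 1) / (1 - |x|) ≤ 2 * |x| ^ 3 := by
    rw [div_le_iff₀ (by linarith)]
    have h3 : 0 ≤ |x| ^ 3 * (1 - 2 * |x|) :=
      mul_nonneg (pow_nonneg (abs_nonneg x) 3) (by linarith)
    norm_num
    linarith
  have h3 := (abs_le.1 (h.trans h2)).1
  norm_num at h3
  linarith

lemma exp_crude {x c : ℝ} (hc : 0 < c) (hx : c ≤ 1 + x) :
    Real.exp (x - x ^ 2 / c) ≤ 1 + x := by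
  have hpos : 0 < 1 + x := hc.trans_le hx
  rw [← Real.le_log_iff_exp_le hpos]
  have h1 := Real.one_sub_inv_le_log_of_pos hpos
  have h2 : x ^ 2 / (1 + x) ≤ x ^ 2 / c := div_le_div_of_nonneg_left (sq_nonneg x) hc hx
  have h3 : 1 - (1 + x)⁻¹ = x - x ^ 2 / (1 + x) := by field_simp; ring
  linarith

lemma prb_le_one (hM : LinModel B c₀ c) {q : Fin m → ℝ} (hq : q ∈ stdCorner m) (j : Fin b) :
    prb B c₀ q j ≤ 1 :=
  weight_le_one (fun j => (prb_pos hM hq j).le) (prb_sum hM q) j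

/-- Crude lower bound for the likelihood at `q + (v - q) / √n`. In contrast to `lik_fine` it holds
for every sample size and for `q` up to the boundary. -/
lemma lik_crude (hM : LinModel B c₀ c) (hn : 0 < n) {q v : Fin m → ℝ} (hq : q ∈ stdCorner m)
    (hv : v ∈ stdCorner m) (y : Fin n → Fin b) :
    (∏ i, prb B c₀ q (y i)) *
        Real.exp (-(1 / (c * √n) * ∑ j, |dev (prb B c₀ q) y j|) - 1 / c ^ 3)
      ≤ ∏ i, prb B c₀ (q + (1 / √n) • (v - q)) (y i) := by
  have hnR : (1 : ℝ) ≤ n := by exact_mod_cast hn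
  have hsn : 1 ≤ √n := Real.one_le_sqrt.2 hnR
  have hs0 : 0 < √n := by linarith
  have hss : √n * √n = n := Real.mul_self_sqrt (by linarith)
  have hc := hM.c_pos
  have hmem : q + (1 / √n) • (v - q) ∈ stdCorner m :=
    (convex_stdCorner m).add_smul_sub_mem hq hv ⟨by positivity, by
      rw [div_le_one hs0]; exact hsn⟩
  set w := prb B c₀ q with hw
  have hwp : ∀ j, 0 < w j := prb_pos hM hq
  set x : Fin b → ℝ := fun j => 1 / √n * (B *ᵥ (v - q)) j / w j with hx
  have hwx : ∀ j, w j * (1 + x j) = prb B c₀ (q + (1 / √n) • (v - q)) j := by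
    intro j
    rw [prb_add, ← hw, hx]
    have := (hwp j).ne'
    field_simp
  have hsum : ∑ j, w j * x j = 0 := by
    have : ∀ j, w j * x j = 1 / √n * (B *ᵥ (v - q)) j := fun j => by
      have := (hwp j).ne'
      simp only [hx]; field_simp
    simp only [this, ← Finset.mul_sum, sum_mulVec hM, mul_zero]
  have hBu : ∀ j, |(B *ᵥ (v - q)) j| ≤ 1 := by
    intro j
    have e : (B *ᵥ (v - q)) j = prb B c₀ v j - prb B c₀ q j := by
      simp [prb, mulVec_sub]
    rw [e, abs_le]
    have := prb_pos hM hq j; have := prb_pos hM hv j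
    have := prb_le_one hM hq j; have := prb_le_one hM hv j
    constructor <;> linarith
  have hxb : ∀ j, |x j| ≤ 1 / (c * √n) := by
    intro j
    simp only [hx]
    rw [abs_div, abs_mul, abs_of_pos (hwp j), abs_of_pos (by positivity : 0 < 1 / √n),
      div_le_div_iff₀ (hwp j) (by positivity)]
    have h1 : 1 / √n * |(B *ᵥ (v - q)) j| * (c * √n) = |(B *ᵥ (v - q)) j| * c := by
      field_simp
    rw [h1, one_mul]
    exact (mul_le_of_le_one_left hc.le (hBu j)).trans (hM.lower q hq j)
  have hone : ∀ j, c ≤ 1 + x j := by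
    intro j
    have h1 := hM.lower _ hmem j
    rw [← hwx j] at h1
    have h2 := prb_le_one hM hq j
    by_contra hcon
    push Not at hcon
    have : 0 ≤ 1 + x j := by
      by_contra h3
      push Not at h3
      nlinarith [hwp j]
    nlinarith [hwp j]
  refine le_trans ?_ (lik_ge (w := w) (w' := prb B c₀ (q + (1 / √n) • (v - q)))
    (ψ := fun j => x j - x j ^ 2 / c) (fun j => (hwp j).le) (fun j => ?_) y)
  · refine mul_le_mul_of_nonneg_left (Real.exp_le_exp.2 ?_)
      (Finset.prod_nonneg fun i _ => (hwp _).le)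
    simp only [mul_sub, Finset.sum_sub_distrib]
    rw [sum_cnt_mul hsum]
    have h1 : -(1 / (c * √n) * ∑ j, |dev w y j|) ≤ ∑ j, dev w y j * x j := by
      rw [Finset.mul_sum, ← Finset.sum_neg_distrib]
      refine Finset.sum_le_sum fun j _ => ?_
      have h2 : |dev w y j * x j| ≤ 1 / (c * √n) * |dev w y j| := by
        rw [abs_mul, mul_comm]
        exact mul_le_mul_of_nonneg_right (hxb j) (abs_nonneg _)
      linarith [neg_abs_le (dev w y j * x j)]
    have h2 : ∑ j, cnt y j * (x j ^ 2 / c) ≤ 1 / c ^ 3 := by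
      have h3 : ∀ j, cnt y j * (x j ^ 2 / c) ≤ cnt y j * (1 / (c ^ 3 * n)) := by
        intro j
        refine mul_le_mul_of_nonneg_left ?_ (cnt_nonneg y j)
        have h4 : x j ^ 2 ≤ (1 / (c * √n)) ^ 2 := by
          rw [← sq_abs]; exact pow_le_pow_left₀ (abs_nonneg _) (hxb j) 2
        calc x j ^ 2 / c ≤ (1 / (c * √n)) ^ 2 / c := div_le_div_of_nonneg_right h4 hc.le
          _ = 1 / (c ^ 3 * (√n * √n)) := by field_simp
          _ = _ := by rw [hss]
      refine (Finset.sum_le_sum fun j _ => h3 j).trans (le_of_eq ?_)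
      rw [← Finset.sum_mul, sum_cnt]
      field_simp
    linarith
  · rw [← hwx j]
    exact mul_le_mul_of_nonneg_left (exp_crude hc (hone j)) (hwp j).le

/-- Quadratic lower bound for the log-likelihood in a neighbourhood of order `n^(-1/2)`, from the
second-order Taylor expansion of `log (1 + x)`. -/
lemma lik_fine (hM : LinModel B c₀ c) (hn : 0 < n) {q : Fin m → ℝ} (hq : q ∈ stdCorner m)
    {M : ℝ} (hMn : 2 * M ≤ √n) {u : Fin m → ℝ} (hu : ∀ j, |(B *ᵥ u) j| ≤ M * c)
    (y : Fin n → Fin b) :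
    (∏ i, prb B c₀ q (y i)) * Real.exp
        (u ⬝ᵥ fisher B (prb B c₀ q) *ᵥ ((1 / √n) • wls B (prb B c₀ q) *ᵥ dev (prb B c₀ q) y)
          - 1 / 2 * (u ⬝ᵥ fisher B (prb B c₀ q) *ᵥ u)
          - (M ^ 2 / (2 * n) * ∑ j, |dev (prb B c₀ q) y j| + 2 * M ^ 3 / √n))
      ≤ ∏ i, prb B c₀ (q + (1 / √n) • u) (y i) := by
  have hnR : (0 : ℝ) < n := by exact_mod_cast hn
  have hs0 : 0 < √n := Real.sqrt_pos.2 hnR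
  have hss : √n * √n = n := Real.mul_self_sqrt hnR.le
  have hc := hM.c_pos
  set w := prb B c₀ q with hw
  have hwp : ∀ j, 0 < w j := prb_pos hM hq
  set x : Fin b → ℝ := fun j => 1 / √n * (B *ᵥ u) j / w j with hx
  have hwx : ∀ j, w j * (1 + x j) = prb B c₀ (q + (1 / √n) • u) j := by
    intro j
    rw [prb_add, ← hw, hx]
    have := (hwp j).ne'
    field_simp
  have hwxe : ∀ j, w j * x j = 1 / √n * (B *ᵥ u) j := fun j => by
    have := (hwp j).ne'
    simp only [hx]; field_simp
  have hsum : ∑ j, w j * x j = 0 := by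
    simp only [hwxe, ← Finset.mul_sum, sum_mulVec hM, mul_zero]
  have hxb : ∀ j, |x j| ≤ M / √n := by
    intro j
    have hM0 : 0 ≤ M := by
      have := (abs_nonneg _).trans (hu j)
      by_contra h; push Not at h; nlinarith
    simp only [hx]
    rw [abs_div, abs_mul, abs_of_pos (hwp j), abs_of_pos (by positivity : 0 < 1 / √n),
      div_le_div_iff₀ (hwp j) (by positivity)]
    have h1 : 1 / √n * |(B *ᵥ u) j| * √n = |(B *ᵥ u) j| := by
      field_simp
    rw [h1]
    exact (hu j).trans (mul_le_mul_of_nonneg_left (hM.lower q hq j) hM0)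
  have hhalf : ∀ j, |x j| ≤ 1 / 2 := fun j => (hxb j).trans (by
    rw [div_le_div_iff₀ hs0 (by norm_num)]; linarith)
  refine le_trans ?_ (lik_ge (w := w) (w' := prb B c₀ (q + (1 / √n) • u))
    (ψ := fun j => x j - x j ^ 2 / 2 - 2 * |x j| ^ 3) (fun j => (hwp j).le) (fun j => ?_) y)
  · refine mul_le_mul_of_nonneg_left (Real.exp_le_exp.2 ?_)
      (Finset.prod_nonneg fun i _ => (hwp _).le)
    simp only [mul_sub, Finset.sum_sub_distrib]
    rw [sum_cnt_mul hsum]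
    have h1 : u ⬝ᵥ fisher B w *ᵥ ((1 / √n) • wls B w *ᵥ dev w y) = ∑ j, dev w y j * x j := by
      rw [mulVec_smul, mulVec_mulVec, fisher_mul_wls hM.inj hwp, ← mulVec_mulVec,
        dotProduct_smul, dotProduct_mulVec, vecMul_transpose, smul_eq_mul, dotProduct,
        Finset.mul_sum]
      refine Finset.sum_congr rfl fun j _ => ?_
      rw [mulVec_diagonal]
      simp only [hx]
      ring
    have h2 : ∑ j, cnt y j * (x j ^ 2 / 2) ≤ 1 / 2 * (u ⬝ᵥ fisher B w *ᵥ u)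
        + M ^ 2 / (2 * n) * ∑ j, |dev w y j| := by
      rw [fisher_quad, Finset.mul_sum, Finset.mul_sum, ← Finset.sum_add_distrib]
      refine Finset.sum_le_sum fun j _ => ?_
      have e1 : cnt y j = n * w j + dev w y j := by simp [dev]
      have e2 : n * w j * (x j ^ 2 / 2) = 1 / 2 * ((w j)⁻¹ * (B *ᵥ u) j ^ 2) := by
        have := (hwp j).ne'
        have hsq : √(n : ℝ) ^ 2 = n := by rw [sq, hss]
        simp only [hx]
        field_simp
        rw [hsq]
      have h4 : x j ^ 2 ≤ M ^ 2 / n := by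
        rw [← sq_abs]
        refine (pow_le_pow_left₀ (abs_nonneg _) (hxb j) 2).trans (le_of_eq ?_)
        rw [div_pow, sq √(n : ℝ), hss]
      have h5 : dev w y j * (x j ^ 2 / 2) ≤ M ^ 2 / (2 * n) * |dev w y j| := by
        calc dev w y j * (x j ^ 2 / 2) ≤ |dev w y j| * (x j ^ 2 / 2) :=
              mul_le_mul_of_nonneg_right (le_abs_self _) (by positivity)
          _ ≤ |dev w y j| * (M ^ 2 / n / 2) :=
              mul_le_mul_of_nonneg_left (by linarith) (abs_nonneg _)
          _ = _ := by field_simp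
      rw [e1, add_mul, e2]
      linarith
    have h3 : ∑ j, cnt y j * (2 * |x j| ^ 3) ≤ 2 * M ^ 3 / √n := by
      have h4 : ∀ j, cnt y j * (2 * |x j| ^ 3) ≤ cnt y j * (2 * (M / √n) ^ 3) := fun j =>
        mul_le_mul_of_nonneg_left
          (mul_le_mul_of_nonneg_left (pow_le_pow_left₀ (abs_nonneg _) (hxb j) 3) (by norm_num))
          (cnt_nonneg y j)
      refine (Finset.sum_le_sum fun j _ => h4 j).trans (le_of_eq ?_)
      have hsq : √(n : ℝ) ^ 2 = n := by rw [sq, hss]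
      rw [← Finset.sum_mul, sum_cnt]
      field_simp
      rw [hsq, mul_comm]
    rw [h1]
    linarith
  · rw [← hwx j]
    refine mul_le_mul_of_nonneg_left ?_ (hwp j).le
    have h1 := abs_le.1 (hhalf j)
    rw [← Real.le_log_iff_exp_le (by linarith)]
    exact log_one_add_ge (hhalf j)

end Local

/-! ### Lower bounds for the mixture-to-likelihood ratio -/

section Lower

variable {m b : ℕ} {B : Matrix (Fin b) (Fin m) ℝ} {c₀ : Fin b → ℝ} {c : ℝ} {n : ℕ}

/-- The expected log-ratio of the mixture to the true likelihood, renormalised by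
`(m/2) log n`. -/
def logRatio (B : Matrix (Fin b) (Fin m) ℝ) (c₀ : Fin b → ℝ) (f : (Fin m → ℝ) → ℝ) (n : ℕ)
    (q : Fin m → ℝ) : ℝ :=
  sampleExp (prb B c₀ q) (fun y : Fin n → Fin b =>
    Real.log (mixC B c₀ f y) - Real.log (∏ i, prb B c₀ q (y i))) + m / 2 * Real.log n

lemma sampleExp_sum_abs_dev_le {w : Fin b → ℝ} (hw : ∀ j, 0 ≤ w j) (hw1 : ∑ j, w j = 1)
    (hn : 0 < n) : sampleExp w (fun y : Fin n → Fin b => ∑ j, |dev w y j|) ≤ b * √n := by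
  rw [sampleExp_sum Finset.univ fun j (y : Fin n → Fin b) => |dev w y j|]
  refine (Finset.sum_le_sum fun j _ => sampleExp_abs_dev_le hw hw1 hn j).trans (le_of_eq ?_)
  simp

lemma log_inv_sqrt_pow (n : ℕ) : Real.log ((1 / √(n : ℝ)) ^ m) = -(m / 2 * Real.log n) := by
  rw [Real.log_pow, one_div, Real.log_inv, Real.log_sqrt (Nat.cast_nonneg n)]
  ring

/-- A lower bound for the log-ratio uniform in the sample size and the parameter, for priors
bounded away from zero: the mixture is restricted to the image of the corner simplex under the
contraction with centre `q` and ratio `1 / √n`. -/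
lemma logRatio_bound (hM : LinModel B c₀ c) {f : (Fin m → ℝ) → ℝ}
    (hf : ContinuousOn f (stdCorner m)) {ε : ℝ} (hε : 0 < ε) (hfε : ∀ q, ε ≤ f q)
    (hV : 0 < volume.real (stdCorner m)) :
    ∃ C, ∀ n : ℕ, 0 < n → ∀ q ∈ stdCorner m, C ≤ logRatio B c₀ f n q := by
  refine ⟨Real.log (volume.real (stdCorner m) * ε) - b / c - 1 / c ^ 3, fun n hn q hq => ?_⟩
  set V := volume.real (stdCorner m) with hVdef
  have hnR : (1 : ℝ) ≤ n := by exact_mod_cast hn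
  have hsn : 1 ≤ √n := Real.one_le_sqrt.2 hnR
  have hs0 : 0 < √n := by linarith
  have hc := hM.c_pos
  set w := prb B c₀ q with hw
  have hwp : ∀ j, 0 ≤ w j := fun j => (prb_pos hM hq j).le
  have key : ∀ y : Fin n → Fin b,
      -(m / 2 * Real.log n) + Real.log (V * ε) - 1 / c ^ 3
        - 1 / (c * √n) * ∑ j, |dev w y j|
      ≤ Real.log (mixC B c₀ f y) - Real.log (∏ i, w (y i)) := by
    intro y
    have hL : 0 < ∏ i, w (y i) := lik_pos hM hq y
    set E := -(1 / (c * √n) * ∑ j, |dev w y j|) - 1 / c ^ 3 with hE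
    set U := (fun u => q + u) ⁻¹' stdCorner m with hU
    have hUm : MeasurableSet U := (measurable_const_add q) (measurableSet_stdCorner m)
    have hUV : volume U = volume (stdCorner m) := measure_preimage_add _ _ _
    have hUV' : volume.real U = V := by rw [Measure.real, hUV]; rfl
    have hmix := mixC_ge hM hf (fun q => hε.le.trans (hfε q)) y (q := q) (s := 1 / √n)
      (by positivity) hUm (fun u hu => by
        have h := (convex_stdCorner m).add_smul_sub_mem hq hu (t := 1 / √n)
          ⟨by positivity, by rw [div_le_one hs0]; exact hsn⟩
        simpa using h) (φ := fun _ => ε * ((∏ i, w (y i)) * Real.exp E))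
      (integrableOn_const (by rw [hUV]; exact (isCompact_stdCorner m).measure_lt_top.ne))
      (fun u hu => by
        have h := lik_crude hM hn hq hu y
        simp only [add_sub_cancel_left] at h
        exact mul_le_mul (hfε _) h (by positivity) (hε.le.trans (hfε _)))
    rw [setIntegral_const, hUV', smul_eq_mul] at hmix
    have h1 := Real.log_le_log (by positivity) hmix
    rw [Real.log_mul (by positivity) (by positivity), log_inv_sqrt_pow n, ← mul_assoc V,
      Real.log_mul (by positivity) (by positivity), Real.log_mul hL.ne' (by positivity),
      Real.log_exp] at h1
    linarith
  have h2 := sampleExp_mono (w := w) hwp key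
  rw [sampleExp_sub (fun _ => _) (fun y : Fin n → Fin b => _), sampleExp_const_mul,
    sampleExp_const (prb_sum hM q)] at h2
  have h3 : 1 / (c * √n) * sampleExp w (fun y : Fin n → Fin b => ∑ j, |dev w y j|) ≤ b / c := by
    refine (mul_le_mul_of_nonneg_left (sampleExp_sum_abs_dev_le hwp (prb_sum hM q) hn)
      (by positivity)).trans (le_of_eq ?_)
    field_simp
  rw [logRatio]
  linarith

lemma fisher_symm (v : Fin b → ℝ) (x z : Fin m → ℝ) :
    x ⬝ᵥ fisher B v *ᵥ z = z ⬝ᵥ fisher B v *ᵥ x := by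
  rw [dotProduct_mulVec, ← mulVec_transpose, dotProduct_comm]
  congr 2
  simp [fisher, transpose_mul, Matrix.mul_assoc]

/-- Completing the square: the integral over a ball centred at `t` of an un-normalised
Gaussian with an arbitrary mean `v`. -/
lemma shifted_gauss_ge (w : Fin b → ℝ) (t v : Fin m → ℝ) (r : ℝ) :
    Real.exp (t ⬝ᵥ fisher B w *ᵥ v - 1 / 2 * (t ⬝ᵥ fisher B w *ᵥ t)) *
        ∫ z in Metric.closedBall (0 : Fin m → ℝ) r,
          Real.exp (-(1 / 2) * (z ⬝ᵥ fisher B w *ᵥ z))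
      ≤ ∫ u in Metric.closedBall t r,
          Real.exp (u ⬝ᵥ fisher B w *ᵥ v - 1 / 2 * (u ⬝ᵥ fisher B w *ᵥ u)) := by
  set J := fisher B w with hJ
  have hpre : (fun z => t + z) ⁻¹' Metric.closedBall t r = Metric.closedBall 0 r := by
    ext z; simp [dist_eq_norm]
  have h1 := (measurePreserving_add_left (volume : Measure (Fin m → ℝ)) t).setIntegral_preimage_emb
    (measurableEmbedding_addLeft t)
    (fun u => Real.exp (u ⬝ᵥ J *ᵥ v - 1 / 2 * (u ⬝ᵥ J *ᵥ u))) (Metric.closedBall t r)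
  rw [hpre] at h1
  rw [← h1]
  have h2 : ∀ z : Fin m → ℝ,
      Real.exp ((t + z) ⬝ᵥ J *ᵥ v - 1 / 2 * ((t + z) ⬝ᵥ J *ᵥ (t + z)))
      = Real.exp (t ⬝ᵥ J *ᵥ v - 1 / 2 * (t ⬝ᵥ J *ᵥ t)) *
        Real.exp ((J *ᵥ (v - t)) ⬝ᵥ z - 1 / 2 * (z ⬝ᵥ J *ᵥ z)) := by
    intro z
    rw [← Real.exp_add]
    congr 1
    rw [dotProduct_comm (J *ᵥ (v - t)) z]
    simp only [add_dotProduct, mulVec_add, dotProduct_add, mulVec_sub, dotProduct_sub]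
    rw [hJ, fisher_symm w t z]
    ring
  simp only [h2]
  rw [integral_const_mul]
  exact mul_le_mul_of_nonneg_left (tilted_gauss_ge J _ r) (Real.exp_pos _).le

lemma mulVec_sq_le (A : Matrix (Fin m) (Fin b) ℝ) (d : Fin b → ℝ) (k : Fin m) :
    (A *ᵥ d) k ^ 2 ≤ (∑ k, ∑ j, A k j ^ 2) * ∑ j, d j ^ 2 := by
  refine (Finset.sum_mul_sq_le_sq_mul_sq Finset.univ (A k) d).trans ?_
  refine mul_le_mul_of_nonneg_right ?_ (Finset.sum_nonneg fun j _ => sq_nonneg _)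
  exact Finset.single_le_sum (f := fun k => ∑ j, A k j ^ 2)
    (fun k _ => Finset.sum_nonneg fun j _ => sq_nonneg _) (Finset.mem_univ k)

/-- The constant controlling the contribution of atypical samples. -/
def tailConst (B : Matrix (Fin b) (Fin m) ℝ) (w : Fin b → ℝ) : ℝ :=
  (∑ j, ∑ k, |wlsGram B w j k|) * ∑ k, ∑ j, wls B w k j ^ 2

lemma tailConst_nonneg (w : Fin b → ℝ) : 0 ≤ tailConst B w :=
  mul_nonneg (Finset.sum_nonneg fun _ _ => Finset.sum_nonneg fun _ _ => abs_nonneg _)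
    (Finset.sum_nonneg fun _ _ => Finset.sum_nonneg fun _ _ => sq_nonneg _)

/-- There is a centre `t` in the ball of radius `R` at which the quadratic approximation of the
log-likelihood almost attains its maximum, up to a term of higher order in the deviation `d`.
The centre is the maximiser if that lies in the ball, and `0` otherwise. -/
lemma exists_centre (hn : 0 < n) (w d : Fin b → ℝ) {R : ℝ} (hR : 0 < R) :
    ∃ t : Fin m → ℝ, ‖t‖ ≤ R ∧
      1 / (2 * n) * (d ⬝ᵥ wlsGram B w *ᵥ d)
        - tailConst B w / (2 * n ^ 2 * R ^ 2) * (∑ j, d j ^ 2) ^ 2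
      ≤ t ⬝ᵥ fisher B w *ᵥ ((1 / √n) • wls B w *ᵥ d) - 1 / 2 * (t ⬝ᵥ fisher B w *ᵥ t) := by
  have hnR : (0 : ℝ) < n := by exact_mod_cast hn
  have hs0 : 0 < √n := Real.sqrt_pos.2 hnR
  have hss : √n * √n = n := Real.mul_self_sqrt hnR.le
  have hsq : √(n : ℝ) ^ 2 = n := by rw [sq, hss]
  have hT := tailConst_nonneg (B := B) w
  set v := (1 / √n) • wls B w *ᵥ d with hv
  set D := ∑ j, d j ^ 2 with hD
  have hD0 : 0 ≤ D := Finset.sum_nonneg fun _ _ => sq_nonneg _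
  have hquad : v ⬝ᵥ fisher B w *ᵥ v = 1 / n * (d ⬝ᵥ wlsGram B w *ᵥ d) := by
    rw [wlsGram_quad, hv, mulVec_smul, smul_dotProduct, dotProduct_smul, smul_eq_mul, smul_eq_mul,
      ← mul_assoc]
    congr 1
    field_simp
    rw [hsq]
  by_cases h : ‖v‖ ≤ R
  · refine ⟨v, h, ?_⟩
    have h2 : 0 ≤ tailConst B w / (2 * n ^ 2 * R ^ 2) * D ^ 2 := by positivity
    have h3 : v ⬝ᵥ fisher B w *ᵥ v - 1 / 2 * (v ⬝ᵥ fisher B w *ᵥ v)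
        = 1 / (2 * n) * (d ⬝ᵥ wlsGram B w *ᵥ d) := by
      rw [hquad]; field_simp; ring
    rw [h3]
    linarith
  · refine ⟨0, by simpa using hR.le, ?_⟩
    simp only [zero_dotProduct, mul_zero, sub_zero]
    rw [pi_norm_le_iff_of_nonneg hR.le] at h
    push Not at h
    obtain ⟨k, hk⟩ := h
    have h1 : R ^ 2 ≤ v k ^ 2 := by
      rw [← sq_abs (v k), ← Real.norm_eq_abs]
      exact pow_le_pow_left₀ hR.le hk.le 2
    have h2 : v k ^ 2 = 1 / n * (wls B w *ᵥ d) k ^ 2 := by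
      rw [hv, Pi.smul_apply, smul_eq_mul, mul_pow, div_pow, hsq, one_pow]
    have h3 := mulVec_sq_le (wls B w) d k
    have h4 := (le_abs_self _).trans (abs_quad_le (wlsGram B w) d)
    rw [← hD] at h3 h4
    set K₁ := ∑ j, ∑ k, |wlsGram B w j k| with hK₁
    set K₂ := ∑ k, ∑ j, wls B w k j ^ 2 with hK₂
    have hK₁0 : 0 ≤ K₁ := Finset.sum_nonneg fun _ _ => Finset.sum_nonneg fun _ _ => abs_nonneg _
    have h5 : 1 ≤ K₂ * D / (n * R ^ 2) := by
      rw [one_le_div (by positivity)]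
      rw [h2, one_div, ← div_eq_inv_mul, le_div_iff₀ hnR] at h1
      linarith
    have h6 : d ⬝ᵥ wlsGram B w *ᵥ d ≤ K₁ * D * (K₂ * D / (n * R ^ 2)) :=
      h4.trans (le_mul_of_one_le_right (mul_nonneg hK₁0 hD0) h5)
    have h7 : tailConst B w / (2 * n ^ 2 * R ^ 2) * D ^ 2
        = 1 / (2 * n) * (K₁ * D * (K₂ * D / (n * R ^ 2))) := by
      rw [tailConst, ← hK₁, ← hK₂]; field_simp
    rw [h7, sub_nonpos]
    exact mul_le_mul_of_nonneg_left h6 (by positivity)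

/-- Laplace-type lower bound for the expected log-ratio, with explicit errors: for each sample the
mixture is restricted to a ball of radius `r / √n` around the centre of `exists_centre`, and the
mean of the quadratic term contributes `m / 2` by `sampleExp_wlsGram`. -/
lemma logRatio_ge (hM : LinModel B c₀ c) {f : (Fin m → ℝ) → ℝ}
    (hf : ContinuousOn f (stdCorner m)) (hf0 : ∀ q, 0 ≤ f q) (hn : 0 < n) {q : Fin m → ℝ}
    (hq : q ∈ stdCorner m) {R r M φ : ℝ} (hR : 0 < R) (hφ : 0 < φ)
    (hloc : ∀ u : Fin m → ℝ, ‖u‖ ≤ R + r →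
      q + (1 / √n) • u ∈ stdCorner m ∧ φ ≤ f (q + (1 / √n) • u))
    (hMu : ∀ u : Fin m → ℝ, ‖u‖ ≤ R + r → ∀ j, |(B *ᵥ u) j| ≤ M * c) (hMn : 2 * M ≤ √n)
    (hg : 0 < ∫ z in Metric.closedBall (0 : Fin m → ℝ) r,
      Real.exp (-(1 / 2) * (z ⬝ᵥ fisher B (prb B c₀ q) *ᵥ z))) :
    Real.log φ + Real.log (∫ z in Metric.closedBall (0 : Fin m → ℝ) r,
        Real.exp (-(1 / 2) * (z ⬝ᵥ fisher B (prb B c₀ q) *ᵥ z)))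
      + m / 2 - 3 * b ^ 2 * tailConst B (prb B c₀ q) / (2 * R ^ 2)
      - (b * M ^ 2 / 2 + 2 * M ^ 3) / √n ≤ logRatio B c₀ f n q := by
  have hnR : (0 : ℝ) < n := by exact_mod_cast hn
  have hs0 : 0 < √n := Real.sqrt_pos.2 hnR
  have hss : √n * √n = n := Real.mul_self_sqrt hnR.le
  set w := prb B c₀ q with hw
  have hwp : ∀ j, 0 < w j := prb_pos hM hq
  have hw1 : ∑ j, w j = 1 := prb_sum hM q
  set J := fisher B w with hJ
  set g := ∫ z in Metric.closedBall (0 : Fin m → ℝ) r, Real.exp (-(1 / 2) * (z ⬝ᵥ J *ᵥ z))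
  have key : ∀ y : Fin n → Fin b,
      (-(m / 2 * Real.log n) + Real.log φ + Real.log g - 2 * M ^ 3 / √n)
        + 1 / (2 * n) * (dev w y ⬝ᵥ wlsGram B w *ᵥ dev w y)
        - tailConst B w / (2 * n ^ 2 * R ^ 2) * (∑ j, dev w y j ^ 2) ^ 2
        - M ^ 2 / (2 * n) * ∑ j, |dev w y j|
      ≤ Real.log (mixC B c₀ f y) - Real.log (∏ i, w (y i)) := by
    intro y
    have hL : 0 < ∏ i, w (y i) := lik_pos hM hq y
    obtain ⟨t, htR, ht⟩ := exists_centre (B := B) hn w (dev w y) hR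
    rw [← hJ] at ht
    set v := (1 / √n) • wls B w *ᵥ dev w y with hv
    set e := M ^ 2 / (2 * n) * ∑ j, |dev w y j| + 2 * M ^ 3 / √n with he
    have hUn : ∀ u ∈ Metric.closedBall t r, ‖u‖ ≤ R + r := by
      intro u hu
      rw [Metric.mem_closedBall, dist_eq_norm] at hu
      have : ‖u‖ ≤ ‖t‖ + ‖u - t‖ := by simpa using norm_add_le t (u - t)
      linarith
    have hcont : Continuous fun u : Fin m → ℝ =>
        Real.exp (u ⬝ᵥ J *ᵥ v - 1 / 2 * (u ⬝ᵥ J *ᵥ u)) :=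
      ((continuous_id.dotProduct continuous_const).sub
        (continuous_const.mul (continuous_quad J))).rexp
    have hmix := mixC_ge hM hf hf0 y (q := q) (s := 1 / √n) (by positivity)
      (Metric.isClosed_closedBall (x := t) (ε := r)).measurableSet
      (fun u hu => (hloc u (hUn u hu)).1)
      (φ := fun u => φ * (∏ i, w (y i)) * Real.exp (-e) *
        Real.exp (u ⬝ᵥ J *ᵥ v - 1 / 2 * (u ⬝ᵥ J *ᵥ u)))
      ((continuous_const.mul hcont).continuousOn.integrableOn_compact
        (isCompact_closedBall t r))
      (fun u hu => by
        have h := lik_fine hM hn hq hMn (hMu u (hUn u hu)) y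
        rw [← hw, ← hv, ← hJ, ← he, sub_eq_add_neg _ e, Real.exp_add] at h
        have h' := mul_le_mul (hloc u (hUn u hu)).2 h (by positivity) (hf0 _)
        refine le_trans (le_of_eq ?_) h'
        ring)
    rw [integral_const_mul] at hmix
    have h1 : (1 / √n) ^ m * (φ * (∏ i, w (y i)) * Real.exp (-e) *
        (Real.exp (t ⬝ᵥ J *ᵥ v - 1 / 2 * (t ⬝ᵥ J *ᵥ t)) * g)) ≤ mixC B c₀ f y := by
      refine le_trans ?_ hmix
      have := shifted_gauss_ge (B := B) w t v r
      gcongr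
    have h2 := Real.log_le_log (by positivity) h1
    rw [Real.log_mul (by positivity) (by positivity), log_inv_sqrt_pow n,
      Real.log_mul (by positivity) (by positivity), Real.log_mul (by positivity) (by positivity),
      Real.log_mul (by positivity) (by positivity), Real.log_mul (by positivity) hg.ne',
      Real.log_exp, Real.log_exp] at h2
    linarith
  have hE := sampleExp_mono (w := w) (fun j => (hwp j).le) key
  rw [sampleExp_sub (fun y : Fin n → Fin b => _ + _ - _) (fun y : Fin n → Fin b => _),
    sampleExp_sub (fun y : Fin n → Fin b => _ + _) (fun y : Fin n → Fin b => _),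
    sampleExp_add (fun y : Fin n → Fin b => _) (fun y : Fin n → Fin b => _),
    sampleExp_const_mul, sampleExp_const_mul, sampleExp_const_mul, sampleExp_const hw1,
    sampleExp_wlsGram hM.inj hM.col_sum hwp hw1] at hE
  have e1 : 1 / (2 * (n : ℝ)) * (n * m) = m / 2 := by field_simp
  have e2 : tailConst B w / (2 * n ^ 2 * R ^ 2) *
      sampleExp w (fun y : Fin n → Fin b => (∑ j, dev w y j ^ 2) ^ 2)
      ≤ 3 * b ^ 2 * tailConst B w / (2 * R ^ 2) := by
    have hT := tailConst_nonneg (B := B) w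
    refine (mul_le_mul_of_nonneg_left
      (sampleExp_sum_sq_sq_le (fun j => (hwp j).le) hw1) (by positivity)).trans (le_of_eq ?_)
    field_simp
  have e3 : M ^ 2 / (2 * n) * sampleExp w (fun y : Fin n → Fin b => ∑ j, |dev w y j|)
      ≤ b * M ^ 2 / 2 / √n := by
    refine (mul_le_mul_of_nonneg_left
      (sampleExp_sum_abs_dev_le (fun j => (hwp j).le) hw1 hn) (by positivity)).trans (le_of_eq ?_)
    have hsq : √(n : ℝ) ^ 2 = n := by rw [sq, hss]
    field_simp
    rw [hsq]
    ring
  rw [e1] at hE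
  rw [logRatio, add_div]
  linarith

end Lower

/-! ### The limit for affine models -/

section Limit

variable {m b : ℕ} {B : Matrix (Fin b) (Fin m) ℝ} {c₀ : Fin b → ℝ} {c : ℝ} {n : ℕ}

lemma mulVec_abs_le (B : Matrix (Fin b) (Fin m) ℝ) (u : Fin m → ℝ) (j : Fin b) :
    |(B *ᵥ u) j| ≤ (∑ j, ∑ k, |B j k|) * ‖u‖ := by
  have h1 : |(B *ᵥ u) j| ≤ ∑ k, |B j k| * ‖u‖ := by
    refine (Finset.abs_sum_le_sum_abs (fun k => B j k * u k) Finset.univ).trans (Finset.sum_le_sum fun k _ => ?_)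
    rw [abs_mul]
    exact mul_le_mul_of_nonneg_left (norm_le_pi_norm u k) (abs_nonneg _)
  rw [← Finset.sum_mul] at h1
  refine h1.trans (mul_le_mul_of_nonneg_right ?_ (norm_nonneg u))
  exact Finset.single_le_sum (f := fun j => ∑ k, |B j k|)
    (fun j _ => Finset.sum_nonneg fun k _ => abs_nonneg _) (Finset.mem_univ j)

/-- The asymptotic value of the expected log-ratio. -/
def limRatio (B : Matrix (Fin b) (Fin m) ℝ) (c₀ : Fin b → ℝ) (f : (Fin m → ℝ) → ℝ)
    (q : Fin m → ℝ) : ℝ :=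
  Real.log (f q) + (m / 2 * Real.log (2 * π) - 1 / 2 * Real.log (fisher B (prb B c₀ q)).det)
    + m / 2

/-- Pointwise asymptotic lower bound for the expected log-ratio. -/
lemma eventually_logRatio_ge (hM : LinModel B c₀ c) {f : (Fin m → ℝ) → ℝ}
    (hf : ContinuousOn f (stdCorner m)) (hf0 : ∀ q, 0 ≤ f q) {q : Fin m → ℝ}
    (hq : q ∈ interior (stdCorner m)) (hfq : 0 < f q) {η : ℝ} (hη : 0 < η) :
    ∀ᶠ n : ℕ in atTop, limRatio B c₀ f q - η ≤ logRatio B c₀ f n q := by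
  have hqΔ := interior_subset hq
  have hc := hM.c_pos
  set w := prb B c₀ q with hw
  have hJ : (fisher B w).PosDef := fisher_posDef hM.inj (prb_pos hM hqΔ)
  set g := ∫ z : Fin m → ℝ, Real.exp (-(1 / 2) * (z ⬝ᵥ fisher B w *ᵥ z)) with hg
  have hgpos : 0 < g := by
    rw [hg, (gauss_integral hJ).2]
    have := hJ.det_pos
    positivity
  have hgl : Real.log g = _ := log_gauss_integral hJ
  -- the radius of the ball over which the Gaussian is integrated
  obtain ⟨r, hr0, hrpos, hrlog⟩ : ∃ r : ℝ, 0 ≤ r ∧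
      0 < (∫ z in Metric.closedBall (0 : Fin m → ℝ) r,
        Real.exp (-(1 / 2) * (z ⬝ᵥ fisher B w *ᵥ z))) ∧
      Real.log g - η / 4 < Real.log (∫ z in Metric.closedBall (0 : Fin m → ℝ) r,
        Real.exp (-(1 / 2) * (z ⬝ᵥ fisher B w *ᵥ z))) := by
    have h1 := tendsto_ball_gauss hJ
    have h2 := h1.log hgpos.ne'
    exact ((eventually_ge_atTop 0).and ((h1.eventually_const_lt hgpos).and
      (h2.eventually_const_lt (by linarith)))).exists
  -- the truncation radius for the centre
  set A := 3 * (b : ℝ) ^ 2 * tailConst B w / 2 with hA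
  have hA0 : 0 ≤ A := by have := tailConst_nonneg (B := B) w; positivity
  obtain ⟨R, hR, hRA⟩ : ∃ R : ℝ, 0 < R ∧ A / R ^ 2 ≤ η / 4 := by
    refine ⟨1 + 4 * A / η, by positivity, ?_⟩
    have h1 : 4 * A / η ≤ (1 + 4 * A / η) ^ 2 := by
      have : 0 ≤ 4 * A / η := by positivity
      nlinarith
    rw [div_le_iff₀ (by positivity)]
    rw [div_le_iff₀ hη] at h1
    linarith
  set M := (∑ j, ∑ k, |B j k|) * (R + r) / c with hMdef
  have hMu : ∀ u : Fin m → ℝ, ‖u‖ ≤ R + r → ∀ j, |(B *ᵥ u) j| ≤ M * c := by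
    intro u hu j
    rw [hMdef, div_mul_cancel₀ _ hc.ne']
    exact (mulVec_abs_le B u j).trans (mul_le_mul_of_nonneg_left hu
      (Finset.sum_nonneg fun j _ => Finset.sum_nonneg fun k _ => abs_nonneg _))
  set φ := f q * Real.exp (-(η / 4)) with hφdef
  have hφ : 0 < φ := by positivity
  have hφf : φ < f q := mul_lt_of_lt_one_right hfq (by rw [Real.exp_lt_one_iff]; linarith)
  have hφlog : Real.log φ = Real.log (f q) - η / 4 := by
    rw [hφdef, Real.log_mul hfq.ne' (Real.exp_pos _).ne', Real.log_exp]; ring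
  have hnhds : ∀ᶠ q' in nhds q, q' ∈ stdCorner m ∧ φ ≤ f q' := by
    have hΔ : stdCorner m ∈ nhds q := mem_interior_iff_mem_nhds.1 hq
    have hcf := (hf.continuousAt hΔ).tendsto.eventually_const_lt hφf
    filter_upwards [hΔ, hcf] with q' h1 h2 using ⟨h1, h2.le⟩
  obtain ⟨ρ, hρ, hball⟩ := Metric.eventually_nhds_iff.1 hnhds
  have hsqrt : Tendsto (fun n : ℕ => √(n : ℝ)) atTop atTop :=
    Real.tendsto_sqrt_atTop.comp tendsto_natCast_atTop_atTop
  have herr : Tendsto (fun n : ℕ => (b * M ^ 2 / 2 + 2 * M ^ 3) / √(n : ℝ)) atTop (nhds 0) :=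
    hsqrt.const_div_atTop _
  have hrad : Tendsto (fun n : ℕ => (R + r) / √(n : ℝ)) atTop (nhds 0) :=
    hsqrt.const_div_atTop _
  filter_upwards [eventually_gt_atTop 0, hsqrt.eventually_ge_atTop (2 * M),
    herr.eventually_lt_const (show (0 : ℝ) < η / 4 by linarith), hrad.eventually_lt_const hρ]
    with n hn hMn hen hrn
  have hs0 : 0 < √(n : ℝ) := Real.sqrt_pos.2 (by exact_mod_cast hn)
  have hmain := logRatio_ge hM hf hf0 hn hqΔ hR hφ (r := r) (fun u hu => hball (by
      rw [dist_eq_norm, add_sub_cancel_left, norm_smul, Real.norm_eq_abs,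
        abs_of_pos (by positivity)]
      refine lt_of_le_of_lt ?_ hrn
      rw [div_mul_eq_mul_div, one_mul]
      exact div_le_div_of_nonneg_right hu hs0.le)) hMu hMn hrpos
  have hAe : 3 * (b : ℝ) ^ 2 * tailConst B w / (2 * R ^ 2) = A / R ^ 2 := by
    rw [hA]; field_simp
  rw [limRatio, ← hw, ← hgl]
  rw [← hw, hφlog, hAe] at hmain
  linarith

lemma continuousOn_logdet (hM : LinModel B c₀ c) :
    ContinuousOn (fun q => Real.log (fisher B (prb B c₀ q)).det) (stdCorner m) := by
  refine ((continuous_logdet_clamp hM.inj hM.c_pos).comp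
    (continuous_prb (B := B) (c₀ := c₀))).continuousOn.congr fun q hq => ?_
  simp only [Function.comp]
  rw [clamp_eq (hM.lower q hq)]

lemma continuousOn_logRatio (hM : LinModel B c₀ c) (f : (Fin m → ℝ) → ℝ) (n : ℕ) :
    ContinuousOn (logRatio B c₀ f n) (stdCorner m) := by
  refine ContinuousOn.add (continuousOn_finsetSum _ fun y _ => ?_) continuousOn_const
  exact (continuous_lik y).continuousOn.mul (continuousOn_const.sub
    ((continuous_lik y).continuousOn.log fun q hq => (lik_pos hM hq y).ne'))

/-- The asymptotic upper bound, by dominated convergence. -/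
lemma tendsto_upper (hM : LinModel B c₀ c) {f : (Fin m → ℝ) → ℝ}
    (hf : ContinuousOn f (stdCorner m)) (hf0 : ∀ q, 0 ≤ f q) :
    Tendsto (fun n : ℕ => ∫ q in stdCorner m, f q * sampleExp (prb B c₀ q)
        (fun y : Fin n → Fin b => plugin B c (prb B c₀ q) y)) atTop
      (nhds (∫ q in stdCorner m,
        f q * (-(1 / 2) * Real.log (fisher B (prb B c₀ q)).det + m / 2))) := by
  have hK := isCompact_stdCorner m
  obtain ⟨C, hC⟩ := sampleExp_plugin_bound (B := B) hM.inj hM.c_pos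
  refine tendsto_integral_filter_of_dominated_convergence (fun q => f q * C) ?_ ?_ ?_ ?_
  · refine Eventually.of_forall fun n => ?_
    refine (hf.mul (Continuous.continuousOn ?_)).aestronglyMeasurable hK.measurableSet
    exact continuous_finsetSum _ fun y _ => (continuous_lik y).mul (continuous_plugin y)
  · filter_upwards [eventually_gt_atTop 0] with n hn
    filter_upwards [ae_restrict_mem hK.measurableSet] with q hq
    rw [Real.norm_eq_abs, abs_mul, abs_of_nonneg (hf0 q)]
    exact mul_le_mul_of_nonneg_left (hC _ (hM.lower q hq) (prb_sum hM q) n hn) (hf0 q)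
  · exact (hf.mul continuousOn_const).integrableOn_compact hK
  · filter_upwards [ae_restrict_mem hK.measurableSet] with q hq
    exact (tendsto_sampleExp_plugin hM.inj hM.col_sum hM.c_pos (hM.lower q hq)
      (prb_sum hM q)).const_mul _

/-- The asymptotic lower bound for a prior bounded away from zero, by dominated convergence
applied to the truncated log-ratios. -/
lemma tendsto_lower (hM : LinModel B c₀ c) {f f' : (Fin m → ℝ) → ℝ}
    (hf : ContinuousOn f (stdCorner m)) (hf0 : ∀ q, 0 ≤ f q)
    (hf' : ContinuousOn f' (stdCorner m)) {ε : ℝ} (hε : 0 < ε) (hfε : ∀ q, ε ≤ f' q)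
    (hV : 0 < volume.real (stdCorner m)) :
    Tendsto (fun n : ℕ => ∫ q in stdCorner m,
        f q * min (logRatio B c₀ f' n q) (limRatio B c₀ f' q)) atTop
      (nhds (∫ q in stdCorner m, f q * limRatio B c₀ f' q)) := by
  have hK := isCompact_stdCorner m
  have hf'0 : ∀ q, 0 < f' q := fun q => hε.trans_le (hfε q)
  have hlim : ContinuousOn (limRatio B c₀ f') (stdCorner m) :=
    ((hf'.log fun q _ => (hf'0 q).ne').add (continuousOn_const.sub
      (continuousOn_const.mul (continuousOn_logdet hM)))).add continuousOn_const
  obtain ⟨C₁, hC₁⟩ := logRatio_bound hM hf' hε hfε hV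
  obtain ⟨C₂, hC₂⟩ := hK.exists_bound_of_continuousOn hlim
  refine tendsto_integral_filter_of_dominated_convergence
    (fun q => f q * (|C₁| + |C₂|)) ?_ ?_ ?_ ?_
  · exact Eventually.of_forall fun n =>
      (hf.mul ((continuousOn_logRatio hM f' n).inf hlim)).aestronglyMeasurable hK.measurableSet
  · filter_upwards [eventually_gt_atTop 0] with n hn
    filter_upwards [ae_restrict_mem hK.measurableSet] with q hq
    rw [Real.norm_eq_abs, abs_mul, abs_of_nonneg (hf0 q)]
    refine mul_le_mul_of_nonneg_left ?_ (hf0 q)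
    have h1 := hC₁ n hn q hq
    have h2 := abs_le.1 (hC₂ q hq)
    have h3 := neg_abs_le C₁
    have h4 := le_abs_self C₂
    have h5 := abs_nonneg C₁
    have h6 := abs_nonneg C₂
    rw [abs_le]
    constructor
    · rw [le_min_iff]; constructor <;> linarith
    · exact (min_le_right _ _).trans (by linarith)
  · exact (hf.mul continuousOn_const).integrableOn_compact hK
  -- the boundary of the convex set `stdCorner m` is a null set
  · have hfr : ∀ᵐ q ∂(volume : Measure (Fin m → ℝ)), q ∉ frontier (stdCorner m) :=
      measure_eq_zero_iff_ae_notMem.1 ((convex_stdCorner m).addHaar_frontier volume)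
    filter_upwards [ae_restrict_mem hK.measurableSet, ae_restrict_of_ae hfr] with q hq hqf
    have hqi : q ∈ interior (stdCorner m) := by
      by_contra h
      exact hqf ⟨subset_closure hq, h⟩
    refine Tendsto.const_mul _ ?_
    rw [tendsto_order]
    constructor
    · intro l hl
      filter_upwards [eventually_logRatio_ge hM hf' (fun q => (hf'0 q).le) hqi (hf'0 q)
        (half_pos (sub_pos.2 hl))] with n hn
      exact lt_min (by linarith) hl
    · intro l hl
      exact Eventually.of_forall fun n => (min_le_right _ _).trans_lt hl

/-- Asymptotics of the conditional entropy in an identifiable affine model: `condH_le` with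
`tendsto_upper` from above, `condH_ge` for the prior `f + ε` with `tendsto_lower` from below. -/
theorem tendsto_condH (hM : LinModel B c₀ c) {f : (Fin m → ℝ) → ℝ}
    (hf : ContinuousOn f (stdCorner m)) (hf0 : ∀ q, 0 ≤ f q)
    (hf1 : ∫ q in stdCorner m, f q = 1) :
    Tendsto (fun n : ℕ => condH B c₀ f n + m / 2 * Real.log n) atTop
      (nhds (m / 2 * Real.log (2 * π * Real.exp 1)
        - 1 / 2 * ∫ q in stdCorner m, Real.log (fisher B (prb B c₀ q)).det * f q)) := by
  have hK := isCompact_stdCorner m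
  set V := volume.real (stdCorner m) with hVdef
  have hV : 0 < V := by
    refine lt_of_le_of_ne measureReal_nonneg fun h => ?_
    have h0 : volume (stdCorner m) = 0 := by
      rw [hVdef, eq_comm, measureReal_eq_zero_iff hK.measure_lt_top.ne] at h; exact h
    rw [setIntegral_measure_zero _ h0] at hf1
    exact zero_ne_one hf1
  have hif : IntegrableOn f (stdCorner m) := hf.integrableOn_compact hK
  have hild : IntegrableOn (fun q => Real.log (fisher B (prb B c₀ q)).det * f q) (stdCorner m) :=
    ((continuousOn_logdet hM).mul hf).integrableOn_compact hK
  set I := ∫ q in stdCorner m, Real.log (fisher B (prb B c₀ q)).det * f q with hI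
  have hlog : m / 2 * Real.log (2 * π * Real.exp 1) = m / 2 * Real.log (2 * π) + (m : ℝ) / 2 := by
    rw [Real.log_mul (by positivity) (Real.exp_pos _).ne', Real.log_exp]; ring
  rw [tendsto_order]
  constructor
  · intro l hl
    set L := m / 2 * Real.log (2 * π * Real.exp 1) - 1 / 2 * I with hL
    -- shifting the prior by `ε` costs at most `log (1 + ε V) ≤ (L - l) / 2` in `condH_ge`
    set ε := (L - l) / 2 / V with hεdef
    have hε : 0 < ε := div_pos (half_pos (sub_pos.2 hl)) hV
    set f' := fun q => f q + ε with hf'def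
    have hf' : ContinuousOn f' (stdCorner m) := hf.add continuousOn_const
    have hf'ε : ∀ q, ε ≤ f' q := fun q => by simp only [hf'def]; linarith [hf0 q]
    have hf'1 : ∫ q in stdCorner m, f' q = 1 + ε * V := by
      rw [integral_add hif (integrableOn_const hK.measure_lt_top.ne), hf1, setIntegral_const,
        smul_eq_mul, mul_comm]
    have hZ : Real.log (∫ q in stdCorner m, f' q) ≤ (L - l) / 2 := by
      have h1 := Real.log_le_sub_one_of_pos (show 0 < 1 + ε * V by positivity)
      have h2 : ε * V = (L - l) / 2 := by rw [hεdef]; field_simp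
      rw [hf'1]; linarith
    have hiflf : IntegrableOn (fun q => f q * Real.log (f q)) (stdCorner m) :=
      (Real.continuous_mul_log.comp_continuousOn hf).integrableOn_compact hK
    have hlimc : ContinuousOn (limRatio B c₀ f') (stdCorner m) :=
      ((hf'.log fun q _ => (hε.trans_le (hf'ε q)).ne').add (continuousOn_const.sub
        (continuousOn_const.mul (continuousOn_logdet hM)))).add continuousOn_const
    -- the entropy of the prior cancels, the shifted prior being at least `f`
    have hlimI : L ≤ (∫ q in stdCorner m, f q * limRatio B c₀ f' q)
        - ∫ q in stdCorner m, f q * Real.log (f q) := by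
      have i1 : IntegrableOn (fun q => f q * limRatio B c₀ f' q) (stdCorner m) :=
        (hf.mul hlimc).integrableOn_compact hK
      have i2 : IntegrableOn (fun q => f q * (m / 2 * Real.log (2 * π * Real.exp 1)))
        (stdCorner m) := hif.mul_const _
      have i3 : IntegrableOn (fun q => 1 / 2 * (Real.log (fisher B (prb B c₀ q)).det * f q))
        (stdCorner m) := hild.const_mul _
      have e1 : L = ∫ q in stdCorner m, (f q * (m / 2 * Real.log (2 * π * Real.exp 1))
          - 1 / 2 * (Real.log (fisher B (prb B c₀ q)).det * f q)) := by
        rw [integral_sub i2 i3, integral_mul_const, integral_const_mul, hf1, one_mul]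
      rw [e1, ← integral_sub i1 hiflf]
      refine setIntegral_mono_on (i2.sub i3) (i1.sub hiflf) hK.measurableSet fun q _ => ?_
      have h1 : f q * Real.log (f q) ≤ f q * Real.log (f' q) := by
        rcases (hf0 q).eq_or_lt with h | h
        · simp [← h]
        · exact mul_le_mul_of_nonneg_left (Real.log_le_log h (by simp only [hf'def]; linarith))
            (hf0 q)
      simp only [limRatio, hlog]
      nlinarith [h1]
    have hmin := tendsto_lower hM hf hf0 hf' hε hf'ε hV
    filter_upwards [hmin.eventually_const_lt (sub_lt_self _ (half_pos (sub_pos.2 hl)))]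
      with n hn
    have hge := condH_ge (n := n) hM hf hf0 hf1 hf' (fun q => hε.le.trans (hf'ε q))
      (by rw [hf'1]; positivity)
    have hcr := continuousOn_logRatio hM f' n
    have i4 : IntegrableOn (fun q => f q * logRatio B c₀ f' n q) (stdCorner m) :=
      (hf.mul hcr).integrableOn_compact hK
    have i5 : IntegrableOn (fun q => f q * min (logRatio B c₀ f' n q) (limRatio B c₀ f' q))
      (stdCorner m) := (hf.mul (hcr.inf hlimc)).integrableOn_compact hK
    have h1 : ∫ q in stdCorner m, f q * min (logRatio B c₀ f' n q) (limRatio B c₀ f' q)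
        ≤ ∫ q in stdCorner m, f q * logRatio B c₀ f' n q :=
      setIntegral_mono_on i5 i4 hK.measurableSet fun q _ =>
        mul_le_mul_of_nonneg_left (min_le_left _ _) (hf0 q)
    have h2 : ∫ q in stdCorner m, f q * sampleExp (prb B c₀ q) (fun y : Fin n → Fin b =>
        Real.log (mixC B c₀ f' y) - Real.log (∏ i, prb B c₀ q (y i)))
        = (∫ q in stdCorner m, f q * logRatio B c₀ f' n q) - m / 2 * Real.log n := by
      have i6 : IntegrableOn (fun q => f q * (m / 2 * Real.log n)) (stdCorner m) :=
        hif.mul_const _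
      have e : m / 2 * Real.log n = ∫ q in stdCorner m, f q * (m / 2 * Real.log n) := by
        rw [integral_mul_const, hf1, one_mul]
      rw [e, ← integral_sub i4 i6]
      congr 1
      funext q
      rw [logRatio]
      ring
    rw [h2] at hge
    linarith
  · intro l hl
    have hup := (tendsto_upper hM hf hf0).const_add (m / 2 * Real.log (2 * π))
    have e : ∫ q in stdCorner m,
        f q * (-(1 / 2) * Real.log (fisher B (prb B c₀ q)).det + m / 2) = m / 2 - 1 / 2 * I := by
      have i1 : IntegrableOn (fun q => f q * ((m : ℝ) / 2)) (stdCorner m) := hif.mul_const _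
      have i2 : IntegrableOn (fun q => 1 / 2 * (Real.log (fisher B (prb B c₀ q)).det * f q))
        (stdCorner m) := hild.const_mul _
      have : ∀ q, f q * (-(1 / 2) * Real.log (fisher B (prb B c₀ q)).det + m / 2)
          = f q * (m / 2) - 1 / 2 * (Real.log (fisher B (prb B c₀ q)).det * f q) := fun q => by
        ring
      simp only [this]
      rw [integral_sub i1 i2, integral_mul_const, integral_const_mul, hf1, one_mul]
    rw [e] at hup
    filter_upwards [hup.eventually_lt_const (show _ < l by linarith), eventually_gt_atTop 0]
      with n hn hn0
    exact (condH_le hM hf hf0 hf1 hn0).trans_lt hn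

end Limit

/-! ### Reduction of the privacy protocol to an affine model -/

section Reduction

variable {m b : ℕ}

/-- The linear part of `q ↦ Q p(q)`. -/
def redB (Q : Matrix (Fin b) (Fin (m + 1)) ℝ) : Matrix (Fin b) (Fin m) ℝ :=
  Matrix.of fun j k => Q j k.castSucc - Q j (Fin.last m)

lemma redB_apply (Q : Matrix (Fin b) (Fin (m + 1)) ℝ) (j : Fin b) (k : Fin m) :
    redB Q j k = Q j k.castSucc - Q j (Fin.last m) := rfl

/-- The constant part of `q ↦ Q p(q)`. -/
def redC (Q : Matrix (Fin b) (Fin (m + 1)) ℝ) : Fin b → ℝ := fun j => Q j (Fin.last m)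

lemma emb_castSucc (q : Fin m → ℝ) (k : Fin m) : emb (m + 1) q k.castSucc = q k := by
  simp [emb]

lemma emb_last (q : Fin m → ℝ) : emb (m + 1) q (Fin.last m) = 1 - ∑ i, q i := by
  simp [emb]

lemma mulVec_emb (Q : Matrix (Fin b) (Fin (m + 1)) ℝ) (q : Fin m → ℝ) :
    Q *ᵥ emb (m + 1) q = prb (redB Q) (redC Q) q := by
  funext j
  have h : (Q *ᵥ emb (m + 1) q) j = ∑ x, Q j x * emb (m + 1) q x := rfl
  rw [h, Fin.sum_univ_castSucc, emb_last]
  simp only [emb_castSucc, prb, redB_apply, redC, mulVec, dotProduct, Pi.add_apply, sub_mul,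
    Finset.sum_sub_distrib, ← Finset.mul_sum]
  ring

lemma emb_mem {q : Fin m → ℝ} (hq : q ∈ stdCorner m) : emb (m + 1) q ∈ simplex (m + 1) := by
  refine ⟨fun x => ?_, ?_⟩
  · refine Fin.lastCases ?_ (fun k => ?_) x
    · rw [emb_last]; linarith [hq.2]
    · rw [emb_castSucc]; exact hq.1 k
  · rw [Fin.sum_univ_castSucc, emb_last]
    simp only [emb_castSucc]
    ring

lemma mulVec_injective_of_rank {Q : Matrix (Fin b) (Fin (m + 1)) ℝ} (h : Q.rank = m + 1) :
    Function.Injective Q.mulVec := by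
  rw [Matrix.mulVec_injective_iff, linearIndependent_iff_card_eq_finrank_span, Set.finrank,
    ← rank_eq_finrank_span_cols, h, Fintype.card_fin]

lemma le_mulVec {Q : Matrix (Fin b) (Fin (m + 1)) ℝ} {c : ℝ} (hc : ∀ y x, c ≤ Q y x)
    {p : Fin (m + 1) → ℝ} (hp : p ∈ simplex (m + 1)) (j : Fin b) : c ≤ (Q *ᵥ p) j := by
  have h : ∑ x, c * p x ≤ ∑ x, Q j x * p x :=
    Finset.sum_le_sum fun x _ => mul_le_mul_of_nonneg_right (hc j x) (hp.1 x)
  rwa [← Finset.mul_sum, hp.2, mul_one] at h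

lemma linModel_red {Q : Matrix (Fin b) (Fin (m + 1)) ℝ} {c : ℝ} (hc0 : 0 < c)
    (hc : ∀ y x, c ≤ Q y x) (hcol : ∀ x, ∑ y, Q y x = 1) (hrank : Q.rank = m + 1) :
    LinModel (redB Q) (redC Q) c where
  c_pos := hc0
  col_sum k := by simp [redB_apply, hcol]
  total := hcol _
  lower q hq j := by
    rw [← mulVec_emb]; exact le_mulVec hc (emb_mem hq) j
  inj := by
    intro u v huv
    -- `prb` is injective because `emb` and `Q` are
    have h : prb (redB Q) (redC Q) u = prb (redB Q) (redC Q) v := by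
      simp only [prb]; rw [show redB Q *ᵥ u = redB Q *ᵥ v from huv]
    rw [← mulVec_emb, ← mulVec_emb] at h
    have h2 := mulVec_injective_of_rank hrank h
    funext k
    rw [← emb_castSucc u k, h2, emb_castSucc]

/-- Since `D_p p = (1, …, 1)`, the change of basis to `e_k - e_last` and `p`, which has
determinant one, makes `D_p` block diagonal with blocks the Fisher information and `1`. -/
lemma det_Dmat {Q : Matrix (Fin b) (Fin (m + 1)) ℝ} (hcol : ∀ x, ∑ y, Q y x = 1)
    {q : Fin m → ℝ} (hpos : ∀ j, 0 < prb (redB Q) (redC Q) q j) :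
    (Dmat Q (emb (m + 1) q)).det = (fisher (redB Q) (prb (redB Q) (redC Q) q)).det := by
  set w := prb (redB Q) (redC Q) q with hw
  have hQw : Q *ᵥ emb (m + 1) q = w := mulVec_emb Q q
  have hw1 : ∑ j, w j = 1 := by
    have h : ∀ j, w j = ∑ x, Q j x * emb (m + 1) q x := fun j => by rw [← hQw]; rfl
    simp only [h]
    rw [Finset.sum_comm]
    simp only [← Finset.sum_mul, hcol, one_mul]
    rw [Fin.sum_univ_castSucc, emb_last]
    simp only [emb_castSucc]
    ring
  set e : Fin m ⊕ Fin 1 ≃ Fin (m + 1) := finSumFinEquiv with he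
  set Q' := Q.submatrix id e with hQ'
  set W : Matrix (Fin b) (Fin b) ℝ := diagonal fun j => (w j)⁻¹ with hW
  set T : Matrix (Fin m ⊕ Fin 1) (Fin m ⊕ Fin 1) ℝ :=
    fromBlocks 1 (Matrix.of fun k _ => q k) (Matrix.of fun _ _ => -1)
      (Matrix.of fun _ _ => 1 - ∑ i, q i) with hT
  have hdetT : T.det = 1 := by
    rw [hT, det_fromBlocks_one₁₁, det_fin_one]
    simp [Matrix.mul_apply]
  have hQT : Q' * T = fromCols (redB Q) (Matrix.of fun j _ => w j) := by
    ext j α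
    rw [Matrix.mul_apply, Fintype.sum_sum_type]
    rcases α with k | k
    · simp only [hQ', hT, he, submatrix_apply, id, fromBlocks_apply₁₁, fromBlocks_apply₂₁,
        of_apply, fromCols_apply_inl, redB_apply, Matrix.one_apply, mul_ite, mul_one, mul_zero,
        Finset.sum_ite_eq', Finset.mem_univ, if_true, Fin.sum_univ_one, Fin.isValue, mul_neg]
      rfl
    · have h : w j = ∑ x, Q j x * emb (m + 1) q x := by rw [← hQw]; rfl
      rw [Fin.sum_univ_castSucc, emb_last] at h
      simp only [emb_castSucc] at h
      rw [fromCols_apply_inr, of_apply, h]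
      simp only [hQ', hT, he, submatrix_apply, id, fromBlocks_apply₁₂, fromBlocks_apply₂₂,
        of_apply, Fin.sum_univ_one, Fin.isValue]
      rfl
  have hblock : Tᵀ * (Q'ᵀ * W * Q') * T
      = fromBlocks (fisher (redB Q) w) 0 0 (1 : Matrix (Fin 1) (Fin 1) ℝ) := by
    have h1 : Tᵀ * (Q'ᵀ * W * Q') * T = (Q' * T)ᵀ * W * (Q' * T) := by
      simp only [transpose_mul, Matrix.mul_assoc]
    rw [h1, hQT, transpose_fromCols, fromRows_mul, fromRows_mul_fromCols]
    have hB0 : ∀ k, ∑ j, redB Q j k = 0 := fun k => by simp [redB_apply, hcol]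
    congr 1
    · ext k l
      rw [Matrix.mul_apply, Matrix.zero_apply]
      simp only [hW, mul_diagonal, transpose_apply, of_apply]
      rw [← hB0 k]
      refine Finset.sum_congr rfl fun j _ => ?_
      rw [mul_assoc, inv_mul_cancel₀ (hpos j).ne', mul_one]
    · ext k l
      rw [Matrix.mul_apply, Matrix.zero_apply]
      simp only [hW, mul_diagonal, transpose_apply, of_apply]
      rw [← hB0 l]
      refine Finset.sum_congr rfl fun j _ => ?_
      rw [mul_inv_cancel₀ (hpos j).ne', one_mul]
    · ext k l
      rw [Matrix.mul_apply]
      simp only [hW, mul_diagonal, transpose_apply, of_apply]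
      rw [Subsingleton.elim k l, one_apply_eq, ← hw1]
      refine Finset.sum_congr rfl fun j _ => ?_
      rw [mul_inv_cancel₀ (hpos j).ne', one_mul]
  have hD : Q'ᵀ * W * Q' = (Dmat Q (emb (m + 1) q)).submatrix e e := by
    rw [Dmat, hQw]
    rfl
  have hdet := congrArg Matrix.det hblock
  rw [det_mul, det_mul, det_transpose, hdetT, one_mul, mul_one, hD, det_submatrix_equiv_self,
    det_fromBlocks_zero₂₁, det_one, mul_one] at hdet
  exact hdet

lemma isCompact_simplex (a : ℕ) : IsCompact (simplex a) := by
  have hcl : IsClosed (simplex a) := by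
    have : simplex a = (⋂ i, {p | 0 ≤ p i}) ∩ {p | ∑ i, p i = 1} := by
      ext p; simp [simplex]
    rw [this]
    exact (isClosed_iInter fun i => isClosed_le continuous_const (continuous_apply i)).inter
      (isClosed_eq (continuous_finsetSum _ fun i _ => continuous_apply i) continuous_const)
  refine (isCompact_Icc (a := (0 : Fin a → ℝ)) (b := 1)).of_isClosed_subset hcl fun p hp => ?_
  refine ⟨fun i => hp.1 i, fun i => ?_⟩
  have := Finset.single_le_sum (fun k _ => hp.1 k) (Finset.mem_univ i)
  rw [hp.2] at this
  exact this

/-- The `μ`-integral of `log det D_p` in the coordinates `q`. As `IsContDensity` only speaks of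
bounded functions, `log det D_p` is first replaced by a bounded function that agrees with it on
the simplex, which carries `μ`. -/
lemma integral_logdet {Q : Matrix (Fin b) (Fin (m + 1)) ℝ} {c : ℝ} (hc0 : 0 < c)
    (hc : ∀ y x, c ≤ Q y x) (hcol : ∀ x, ∑ y, Q y x = 1) (hrank : Q.rank = m + 1)
    (μ : Measure (Fin (m + 1) → ℝ)) [IsProbabilityMeasure μ] {f : (Fin m → ℝ) → ℝ}
    (hf : IsContDensity μ f) :
    ∫ p, Real.log (Dmat Q p).det ∂μ = ∫ q in stdCorner m,
      Real.log (fisher (redB Q) (prb (redB Q) (redC Q) q)).det * f q := by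
  obtain ⟨-, -, hf1, hform⟩ := hf
  have hS := isCompact_simplex (m + 1)
  have hM := linModel_red hc0 hc hcol hrank
  have hae : ∀ᵐ p ∂μ, p ∈ simplex (m + 1) := by
    have h1 := hform ((simplex (m + 1)).indicator 1)
      (measurable_one.indicator hS.measurableSet) ⟨1, fun p => by
        by_cases h : p ∈ simplex (m + 1) <;> simp [h]⟩
    rw [integral_indicator_one hS.measurableSet] at h1
    have h2 : ∫ q in stdCorner m, (simplex (m + 1)).indicator 1 (emb (m + 1) q) * f q = 1 := by
      refine Eq.trans ?_ hf1
      refine setIntegral_congr_fun (measurableSet_stdCorner m) fun q hq => ?_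
      rw [Set.indicator_of_mem (emb_mem hq), Pi.one_apply, one_mul]
    have h3 : μ.real (simplex (m + 1)) = 1 := h1.trans h2
    rw [Measure.real, ENNReal.toReal_eq_one_iff] at h3
    exact (mem_ae_iff_prob_eq_one hS.measurableSet).2 h3
  set G := fun p : Fin (m + 1) → ℝ => Real.log (fisher Q (clamp c (Q *ᵥ p))).det with hG
  have hGc : Continuous G := (continuous_logdet_clamp (mulVec_injective_of_rank hrank) hc0).comp
    (continuous_const.matrix_mulVec continuous_id)
  have hDG : ∀ p ∈ simplex (m + 1), Real.log (Dmat Q p).det = G p := fun p hp => by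
    simp only [hG]
    rw [clamp_eq (le_mulVec hc hp)]
    rfl
  obtain ⟨C, hC⟩ := hS.exists_bound_of_continuousOn hGc.continuousOn
  have h1 := hform ((simplex (m + 1)).indicator G) (hGc.measurable.indicator hS.measurableSet)
    ⟨|C|, fun p => by
      by_cases h : p ∈ simplex (m + 1)
      · rw [Set.indicator_of_mem h]; exact (hC p h).trans (le_abs_self C)
      · simp [h]⟩
  have h2 : ∫ p, Real.log (Dmat Q p).det ∂μ = ∫ p, (simplex (m + 1)).indicator G p ∂μ := by
    refine integral_congr_ae ?_
    filter_upwards [hae] with p hp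
    rw [Set.indicator_of_mem hp, hDG p hp]
  rw [h2, h1]
  refine setIntegral_congr_fun (measurableSet_stdCorner m) fun q hq => ?_
  have hq' : q ∈ stdCorner m := hq
  rw [Set.indicator_of_mem (emb_mem hq'), ← hDG _ (emb_mem hq'), det_Dmat hcol (prb_pos hM hq')]

end Reduction

/-- asymptotics of the conditional differential entropy
`h_n(P|Y⃗)`. -/
theorem hCond_asymptotics {a b : ℕ} (ha : 2 ≤ a) (hb : 2 ≤ b)
    (Q : Matrix (Fin b) (Fin a) ℝ)
    (hQpos : ∀ y x, 0 < Q y x) (hQcol : ∀ x, ∑ y, Q y x = 1)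
    (μ : Measure (Fin a → ℝ)) [IsProbabilityMeasure μ]
    (hrank : Q.rank = a)
    (f : (Fin (a - 1) → ℝ) → ℝ) (hf : IsContDensity μ f)
    (hint : Integrable (fun p => Real.log (Dmat Q p).det) μ) :
    Filter.Tendsto (fun n : ℕ => hCond Q f n + (((a : ℝ) - 1) / 2) * Real.log n)
      Filter.atTop (nhds (gammaMu Q μ)) := by
  obtain ⟨m, rfl⟩ : ∃ m, a = m + 1 := ⟨a - 1, by omega⟩
  change (Fin m → ℝ) → ℝ at f
  obtain ⟨c, hc0, hc⟩ : ∃ c, 0 < c ∧ ∀ y x, c ≤ Q y x := by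
    have : Nonempty (Fin b) := ⟨⟨0, by omega⟩⟩
    obtain ⟨z, hz⟩ := Finite.exists_min fun z : Fin b × Fin (m + 1) => Q z.1 z.2
    exact ⟨Q z.1 z.2, hQpos _ _, fun y x => hz (y, x)⟩
  have hM := linModel_red hc0 hc hQcol hrank
  have hlik : ∀ {n : ℕ} (y : Fin n → Fin b) (q : Fin m → ℝ),
      lik Q y (emb (m + 1) q) = ∏ i, prb (redB Q) (redC Q) q (y i) := fun y q => by
    rw [lik, ← mulVec_emb]
  have hCw : ∀ {n : ℕ} (y : Fin n → Fin b), Cw Q f y = mixC (redB Q) (redC Q) f y := by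
    intro n y
    simp only [Cw, mixC, hlik]
    rfl
  have hcond : ∀ n, hCond Q f n = condH (redB Q) (redC Q) f n := by
    intro n
    refine Finset.sum_congr rfl fun y _ => ?_
    have : gpost Q f y = postG (redB Q) (redC Q) f y := by
      funext q
      rw [gpost, postG, hCw]
      congr 2
      exact hlik y q
    rw [this, hCw]
    rfl
  have hcast : ((m + 1 : ℕ) : ℝ) - 1 = m := by push_cast; ring
  have hlim := tendsto_condH hM hf.1 hf.2.1 hf.2.2.1
  rw [gammaMu, integral_logdet hc0 hc hQcol hrank μ hf, hcast]
  simpa only [hcond] using hlim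

end
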